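/- Let A be a basic indecomposable artin algebra and Γ a cycle-finite component of the cyclic quiver _cΓ_A. Then the support supp(Γ) of Γ is a convex subcategory of A. -/

import Mathlib

/-!
Common framework: finite length modules over a ring, the radical of the module
category, cycles of indecomposable modules, Auslander-Reiten quivers,
translation quivers notions, and classes of artin algebras.
Right `A`-modules are formalized as left `Aᵐᵒᵖ`-modules.
-/

universe u

/-- A bundled object of `mod R`: a finite length `R`-module. -/
structure ModA (R : Type u) [Ring R] : Type (u + 1) where
  M : Type u
  [acg : AddCommGroup M]
  [mod : Module R M]
  finLen : IsFiniteLength R M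

attribute [instance] ModA.acg ModA.mod

/-- A bundled (not necessarily finite length) `R`-module. -/
structure RawMod (R : Type u) [Ring R] : Type (u + 1) where
  M : Type u
  [acg : AddCommGroup M]
  [mod : Module R M]

attribute [instance] RawMod.acg RawMod.mod

/-- A module is indecomposable iff it is nonzero and its endomorphism ring has no
nontrivial idempotents. -/
def IsIndecMod (R : Type u) [Ring R] (M : Type u) [AddCommGroup M] [Module R M] : Prop :=
  Nontrivial M ∧ ∀ f : Module.End R M, f * f = f → f = 0 ∨ f = 1

namespace ModA

variable {R : Type u} [Ring R]

/-- Indecomposability of an object of `mod R`. -/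
def IsIndec (X : ModA R) : Prop := IsIndecMod R X.M

/-- Isomorphism of objects of `mod R`. -/
def Iso (X Y : ModA R) : Prop := Nonempty (X.M ≃ₗ[R] Y.M)

end ModA

/-- Membership in the radical `rad(X, Y)` of the category `mod R`: a map `f : X → Y`
belongs to the radical iff for every indecomposable `Z` and all `g : Z → X`, `h : Y → Z`
the composite `h ∘ f ∘ g` is not an isomorphism. -/
def InRad {R : Type u} [Ring R] {X Y : ModA R} (f : X.M →ₗ[R] Y.M) : Prop :=
  ∀ Z : ModA R, Z.IsIndec → ∀ (g : Z.M →ₗ[R] X.M) (h : Y.M →ₗ[R] Z.M),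
    ¬Function.Bijective (h.comp (f.comp g))

/-- The powers `rad^n` of the radical of `mod R`. -/
def radPow (R : Type u) [Ring R] : ℕ → ∀ X Y : ModA R, AddSubgroup (X.M →ₗ[R] Y.M)
  | 0, _, _ => ⊤
  | n + 1, X, Y => AddSubgroup.closure
      {f | ∃ (Z : ModA R) (g : X.M →ₗ[R] Z.M) (h : Z.M →ₗ[R] Y.M),
        InRad g ∧ h ∈ radPow R n Z Y ∧ f = h.comp g}

/-- Membership in the infinite radical `rad^∞ = ⋂ₙ radⁿ` of `mod R`. -/
def InRadInf {R : Type u} [Ring R] {X Y : ModA R} (f : X.M →ₗ[R] Y.M) : Prop :=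
  ∀ n : ℕ, f ∈ radPow R n X Y

/-- A cycle in `ind R`: a sequence of nonzero nonisomorphisms
`M₀ → M₁ → ⋯ → M_{r-1} → M_r = M₀` between indecomposable modules. -/
structure ModCycle (R : Type u) [Ring R] : Type (u + 1) where
  len : ℕ
  len_pos : 0 < len
  obj : Fin (len + 1) → ModA R
  obj_indec : ∀ i, (obj i).IsIndec
  closed : obj (Fin.last len) = obj 0
  hom : ∀ i : Fin len, (obj i.castSucc).M →ₗ[R] (obj i.succ).M
  hom_ne_zero : ∀ i, hom i ≠ 0
  hom_not_iso : ∀ i, ¬Function.Bijective (hom i)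

/-- A cycle is finite if none of its homomorphisms lies in the infinite radical. -/
def ModCycle.IsFiniteCycle {R : Type u} [Ring R] (c : ModCycle R) : Prop :=
  ∀ i, ¬InRadInf (c.hom i)

/-- The cycle passes through the module `M`. -/
def ModCycle.Passes {R : Type u} [Ring R] (c : ModCycle R) (M : ModA R) : Prop :=
  ∃ i, (c.obj i).Iso M

/-- A module is cycle-finite if it lies on a cycle and every cycle through it is finite. -/
def IsCycleFiniteModule {R : Type u} [Ring R] (M : ModA R) : Prop :=
  (∃ c : ModCycle R, c.Passes M) ∧ ∀ c : ModCycle R, c.Passes M → c.IsFiniteCycle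

/-- A module is directing if it lies on no cycle. -/
def IsDirectingModule {R : Type u} [Ring R] (M : ModA R) : Prop :=
  ¬∃ c : ModCycle R, c.Passes M

section Irreducible

variable {R : Type u} [Ring R]

/-- `f` is a split monomorphism (a section). -/
def SplitMonoMap {X Y : ModA R} (f : X.M →ₗ[R] Y.M) : Prop :=
  ∃ r : Y.M →ₗ[R] X.M, r.comp f = LinearMap.id

/-- `f` is a split epimorphism (a retraction). -/
def SplitEpiMap {X Y : ModA R} (f : X.M →ₗ[R] Y.M) : Prop :=
  ∃ s : Y.M →ₗ[R] X.M, f.comp s = LinearMap.id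

/-- `f` is an irreducible homomorphism. -/
def IsIrred {X Y : ModA R} (f : X.M →ₗ[R] Y.M) : Prop :=
  ¬SplitMonoMap f ∧ ¬SplitEpiMap f ∧
    ∀ (Z : ModA R) (g : X.M →ₗ[R] Z.M) (h : Z.M →ₗ[R] Y.M), h.comp g = f →
      SplitMonoMap g ∨ SplitEpiMap h

end Irreducible

/-- An almost split (Auslander-Reiten) sequence `0 → l → m → r → 0` in `mod R`. -/
structure AlmostSplitSeq (R : Type u) [Ring R] : Type (u + 1) where
  l : ModA R
  m : ModA R
  r : ModA R
  f : l.M →ₗ[R] m.M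
  g : m.M →ₗ[R] r.M
  inj : Function.Injective f
  surj : Function.Surjective g
  exact : LinearMap.range f = LinearMap.ker g
  not_split : ¬SplitEpiMap g
  l_indec : l.IsIndec
  r_indec : r.IsIndec
  right_almost : ∀ (Z : ModA R) (h : Z.M →ₗ[R] r.M), ¬SplitEpiMap h →
      ∃ h' : Z.M →ₗ[R] m.M, g.comp h' = h
  left_almost : ∀ (Z : ModA R) (h : l.M →ₗ[R] Z.M), ¬SplitMonoMap h →
      ∃ h' : m.M →ₗ[R] Z.M, h'.comp f = h

/-- `N ≅ τ M` for the Auslander-Reiten translation `τ = DTr`. -/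
def IsTauOf {R : Type u} [Ring R] (N M : ModA R) : Prop :=
  ∃ s : AlmostSplitSeq R, s.l.Iso N ∧ s.r.Iso M

/-- The indecomposable objects of `mod R`. -/
def IndecModA (R : Type u) [Ring R] := {X : ModA R // X.IsIndec}

/-- Isomorphism is an equivalence relation on indecomposable modules. -/
def isoSetoid (R : Type u) [Ring R] : Setoid (IndecModA R) where
  r X Y := X.1.Iso Y.1
  iseqv :=
    { refl := fun X => ⟨LinearEquiv.refl R X.1.M⟩
      symm := fun h => h.elim fun e => ⟨e.symm⟩
      trans := fun h h' => h.elim fun e => h'.elim fun e' => ⟨e.trans e'⟩ }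

/-- The vertices of the Auslander-Reiten quiver `Γ_R`: isomorphism classes of
indecomposable modules in `mod R`. -/
def ARVertex (R : Type u) [Ring R] := Quotient (isoSetoid R)

/-- The vertex of `Γ_R` given by an indecomposable module. -/
def ARVertex.mk {R : Type u} [Ring R] (X : IndecModA R) : ARVertex R :=
  Quotient.mk (isoSetoid R) X

section ARQuiver

variable {R : Type u} [Ring R]

/-- The arrows of the Auslander-Reiten quiver: `x → y` iff there is an irreducible
homomorphism between representatives. -/
def ARArrow (x y : ARVertex R) : Prop :=
  ∃ (X Y : IndecModA R) (f : X.1.M →ₗ[R] Y.1.M),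
    IsIrred f ∧ ARVertex.mk X = x ∧ ARVertex.mk Y = y

/-- `TauRel x y` iff `x = τ y` in the Auslander-Reiten quiver. -/
def TauRel (x y : ARVertex R) : Prop :=
  ∃ X Y : IndecModA R, ARVertex.mk X = x ∧ ARVertex.mk Y = y ∧ IsTauOf X.1 Y.1

/-- A vertex given by an (indecomposable) projective module. -/
def IsProjVertex (x : ARVertex R) : Prop :=
  ∃ X : IndecModA R, ARVertex.mk X = x ∧ Module.Projective R X.1.M

/-- A vertex given by an (indecomposable) injective module. -/
def IsInjVertex (x : ARVertex R) : Prop :=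
  ∃ X : IndecModA R, ARVertex.mk X = x ∧ Module.Injective R X.1.M

/-- The vertex lies on an oriented cycle of `Γ_R`. -/
def OnARCycle (x : ARVertex R) : Prop := Relation.TransGen ARArrow x x

/-- An edge (arrow in either direction) of the underlying graph of `Γ_R`. -/
def ARStep (x y : ARVertex R) : Prop := ARArrow x y ∨ ARArrow y x

/-- `D` is a connected component of the full subquiver of `Γ_R` on the vertex set `S`. -/
def IsComponentOf (S D : Set (ARVertex R)) : Prop :=
  D ⊆ S ∧ D.Nonempty ∧
    (∀ x ∈ D, ∀ y ∈ S, ARStep x y → y ∈ D) ∧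
    ∀ x ∈ D, ∀ y ∈ D, Relation.ReflTransGen (fun a b => a ∈ S ∧ b ∈ S ∧ ARStep a b) x y

/-- `C` is a connected component of `Γ_R`. -/
def IsARComponent (C : Set (ARVertex R)) : Prop := IsComponentOf Set.univ C

/-- The vertex lies on an oriented cycle all of whose vertices belong to `S`. -/
def OnCycleIn (S : Set (ARVertex R)) (x : ARVertex R) : Prop :=
  Relation.TransGen (fun a b => a ∈ S ∧ b ∈ S ∧ ARArrow a b) x x

/-- `Γ` is a connected component of the cyclic quiver `_cΓ_R` (a cyclic component). -/
def IsCyclicComponent (Γ : Set (ARVertex R)) : Prop :=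
  IsComponentOf {x | OnARCycle x} Γ

/-- A vertex represented by a cycle-finite module. -/
def IsCycleFiniteVertex (x : ARVertex R) : Prop :=
  ∃ X : IndecModA R, ARVertex.mk X = x ∧ IsCycleFiniteModule X.1

/-- A vertex represented by a directing module. -/
def IsDirectingVertex (x : ARVertex R) : Prop :=
  ∃ X : IndecModA R, ARVertex.mk X = x ∧ IsDirectingModule X.1

/-- A cycle-finite cyclic component: a cyclic component containing a cycle-finite module. -/
def IsCycleFiniteCyclicComponent (Γ : Set (ARVertex R)) : Prop :=
  IsCyclicComponent Γ ∧ ∃ x ∈ Γ, IsCycleFiniteVertex x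

/-- A full translation subquiver is cyclic if each of its vertices lies on an oriented
cycle inside it. -/
def IsCyclicSub (S : Set (ARVertex R)) : Prop := ∀ x ∈ S, OnCycleIn S x

/-- A full translation subquiver is coherent: every projective vertex is the start of an
infinite sectional path inside it, and every injective vertex is the end of an infinite
sectional path inside it. -/
def IsCoherentSub (S : Set (ARVertex R)) : Prop :=
  (∀ x ∈ S, IsProjVertex x → ∃ c : ℕ → ARVertex R, c 0 = x ∧ (∀ n, c n ∈ S) ∧
      (∀ n, ARArrow (c n) (c (n + 1))) ∧ ∀ n, ¬TauRel (c n) (c (n + 2))) ∧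
  (∀ x ∈ S, IsInjVertex x → ∃ c : ℕ → ARVertex R, c 0 = x ∧ (∀ n, c n ∈ S) ∧
      (∀ n, ARArrow (c (n + 1)) (c n)) ∧ ∀ n, ¬TauRel (c (n + 2)) (c n))

/-- `S` is a convex subquiver of (the full subquiver on) `C`: every path in `C` with
source and target in `S` has all its vertices in `S`. -/
def ConvexIn (C S : Set (ARVertex R)) : Prop :=
  ∀ (n : ℕ) (c : ℕ → ARVertex R), (∀ k ≤ n, c k ∈ C) →
    (∀ k < n, ARArrow (c k) (c (k + 1))) → c 0 ∈ S → c n ∈ S → ∀ k ≤ n, c k ∈ S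

/-- `S` is the core of the almost acyclic component `C`: the finite convex subquiver of
`C` containing all vertices lying on oriented cycles in `C`. -/
def IsCoreOf (C S : Set (ARVertex R)) : Prop :=
  S ⊆ C ∧ S.Finite ∧ ConvexIn C S ∧ ∀ x ∈ C, OnCycleIn C x → x ∈ S

/-- A component is almost acyclic if all but finitely many of its vertices do not lie on
oriented cycles. -/
def IsAlmostAcyclicComp (C : Set (ARVertex R)) : Prop := {x ∈ C | OnCycleIn C x}.Finite

/-- A component is almost cyclic if its cyclic part is cofinite. -/
def IsAlmostCyclicComp (C : Set (ARVertex R)) : Prop := {x ∈ C | ¬OnCycleIn C x}.Finite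

/-- Two vertices lie in the same `τ`-orbit. -/
def TauConn (x y : ARVertex R) : Prop :=
  Relation.ReflTransGen (fun a b => TauRel a b ∨ TauRel b a) x y

/-- The left stable part of `C`: remove the `τ`-orbits of projective vertices. -/
def leftStable (C : Set (ARVertex R)) : Set (ARVertex R) :=
  {x | x ∈ C ∧ ¬∃ y, TauConn x y ∧ IsProjVertex y}

/-- The right stable part of `C`: remove the `τ`-orbits of injective vertices. -/
def rightStable (C : Set (ARVertex R)) : Set (ARVertex R) :=
  {x | x ∈ C ∧ ¬∃ y, TauConn x y ∧ IsInjVertex y}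

/-- The stable part of `C`. -/
def stablePart (C : Set (ARVertex R)) : Set (ARVertex R) := leftStable C ∩ rightStable C

end ARQuiver

/-- The arrows of the translation quiver `ℤA∞/(τ^r)`, with vertices indexed by the
`τ`-orbit coordinate in `ZMod r` and the quasi-length (minus one) in `ℕ`. -/
def TubeArrow {r : ℕ} : ZMod r × ℕ → ZMod r × ℕ → Prop := fun u v =>
  (v.1 = u.1 ∧ v.2 = u.2 + 1) ∨ (v.1 = u.1 + 1 ∧ u.2 = v.2 + 1)

section Tube

variable {R : Type u} [Ring R]

/-- `T` is a stable tube of rank `r`, parametrized by `φ : ℤA∞/(τ^r) → Γ_R`. -/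
def IsStableTubeVia (T : Set (ARVertex R)) (r : ℕ) (φ : ZMod r × ℕ → ARVertex R) : Prop :=
  0 < r ∧ Function.Injective φ ∧ Set.range φ = T ∧
    (∀ u v, TubeArrow u v → ARArrow (φ u) (φ v)) ∧
    (∀ u v, ARArrow (φ u) (φ v) → TubeArrow u v) ∧
    ∀ (i : ZMod r) (n : ℕ), TauRel (φ (i - 1, n)) (φ (i, n))

/-- `T` is a stable tube. -/
def IsStableTube (T : Set (ARVertex R)) : Prop := ∃ r φ, IsStableTubeVia T r φ

end Tube

section Separating

variable {R : Type u} [Ring R]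

/-- A family of vertices is generalized standard if `rad^∞` vanishes between its modules. -/
def GeneralizedStandardSet (U : Set (ARVertex R)) : Prop :=
  ∀ X Y : IndecModA R, ARVertex.mk X ∈ U → ARVertex.mk Y ∈ U →
    ∀ f : X.1.M →ₗ[R] Y.1.M, InRadInf f → f = 0

/-- `S` is (isomorphic to) a composition factor (a subquotient) of `M`. -/
def IsCompFactorMod (R : Type u) [Ring R] (S : Type u) [AddCommGroup S] [Module R S]
    (M : Type u) [AddCommGroup M] [Module R M] : Prop :=
  ∃ N' N : Submodule R M, N' ≤ N ∧
    Nonempty ((↥N ⧸ N'.comap N.subtype) ≃ₗ[R] S)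

/-- A family of vertices is sincere if every simple module is a composition factor of one
of its modules. -/
def SincereSet (U : Set (ARVertex R)) : Prop :=
  ∀ (S : Type u) [AddCommGroup S] [Module R S], IsSimpleModule R S →
    ∃ x ∈ U, ∃ X : IndecModA R, ARVertex.mk X = x ∧ IsCompFactorMod R S X.1.M

/-- All homomorphisms from modules with vertex in `U` to modules with vertex in `V` vanish. -/
def HomVanish (U V : Set (ARVertex R)) : Prop :=
  ∀ X Y : IndecModA R, ARVertex.mk X ∈ U → ARVertex.mk Y ∈ V →
    ∀ f : X.1.M →ₗ[R] Y.1.M, f = 0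

/-- Every homomorphism from a module in `U` to a module in `V` factors through the
additive closure of the modules in `W`. -/
def FactorsThrough (U W V : Set (ARVertex R)) : Prop :=
  ∀ X Y : IndecModA R, ARVertex.mk X ∈ U → ARVertex.mk Y ∈ V →
    ∀ f : X.1.M →ₗ[R] Y.1.M, ∃ (k : ℕ) (Z : Fin k → IndecModA R)
      (g : ∀ i, X.1.M →ₗ[R] (Z i).1.M) (h : ∀ i, (Z i).1.M →ₗ[R] Y.1.M),
      (∀ i, ARVertex.mk (Z i) ∈ W) ∧ f = ∑ i, (h i).comp (g i)

/-- `cs` is a separating family of components of `Γ_R`. -/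
def IsSeparatingFamily (cs : Set (Set (ARVertex R))) : Prop :=
  ∃ ps qs : Set (Set (ARVertex R)),
    (∀ C ∈ ps, IsARComponent C) ∧ (∀ C ∈ cs, IsARComponent C) ∧ (∀ C ∈ qs, IsARComponent C) ∧
    (∀ C, IsARComponent C → C ∈ ps ∨ C ∈ cs ∨ C ∈ qs) ∧
    (∀ C ∈ ps, C ∉ cs ∧ C ∉ qs) ∧ (∀ C ∈ cs, C ∉ qs) ∧
    SincereSet (⋃₀ cs) ∧ GeneralizedStandardSet (⋃₀ cs) ∧
    HomVanish (⋃₀ qs) (⋃₀ ps) ∧ HomVanish (⋃₀ qs) (⋃₀ cs) ∧ HomVanish (⋃₀ cs) (⋃₀ ps) ∧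
    FactorsThrough (⋃₀ ps) (⋃₀ cs) (⋃₀ qs)

end Separating

/-! ### Classes of algebras via their Auslander-Reiten quivers.
For a ring `B`, the category `mod B` of finitely generated right `B`-modules is
realized as the category of finite length left `Bᵐᵒᵖ`-modules. -/

/-- An algebra is of finite representation type if it has only finitely many isomorphism
classes of indecomposable finitely generated (right) modules. -/
def IsFiniteRepTypeAlg (B : Type u) [Ring B] : Prop :=
  (Set.univ : Set (ARVertex Bᵐᵒᵖ)).Finite

/-- An algebra is cycle-finite if all cycles in `ind B` are finite. -/
def IsCycleFiniteAlg (B : Type u) [Ring B] : Prop :=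
  ∀ c : ModCycle Bᵐᵒᵖ, c.IsFiniteCycle

/-- A generalized multicoil algebra: an algebra whose Auslander-Reiten quiver admits a
separating family of almost cyclic coherent components. -/
def IsGeneralizedMulticoilAlgebra (B : Type u) [Ring B] : Prop :=
  ∃ cs : Set (Set (ARVertex Bᵐᵒᵖ)),
    (∀ C ∈ cs, IsARComponent C ∧ IsAlmostCyclicComp C ∧ IsCoherentSub C) ∧
    IsSeparatingFamily cs

/-- A generalized double tilted algebra: an algebra whose Auslander-Reiten quiver admits
a separating almost acyclic component (a connecting component). -/
def IsGeneralizedDoubleTiltedAlgebra (B : Type u) [Ring B] : Prop :=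
  ∃ C : Set (ARVertex Bᵐᵒᵖ),
    IsARComponent C ∧ IsAlmostAcyclicComp C ∧ IsSeparatingFamily {C}

/-- A concealed canonical algebra: an algebra whose Auslander-Reiten quiver admits a
separating family of stable tubes. -/
def IsConcealedCanonicalAlgebra (B : Type u) [Ring B] : Prop :=
  ∃ ts : Set (Set (ARVertex Bᵐᵒᵖ)), (∀ T ∈ ts, IsStableTube T) ∧ IsSeparatingFamily ts

/-- A generic module: an indecomposable module of infinite length with finite endolength. -/
def IsGenericModule (R : Type u) [Ring R] (N : RawMod R) : Prop :=
  IsIndecMod R N.M ∧ ¬IsFiniteLength R N.M ∧ IsFiniteLength (Module.End R N.M) N.M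

/-- The endolength of a module: its length over its endomorphism ring. -/
noncomputable def endolength (R : Type u) [Ring R] (N : RawMod R) : WithBot ℕ∞ :=
  Order.krullDim (Submodule (Module.End R N.M) N.M)

/-- Generic tameness in the sense of Crawley-Boevey: for each `d` there are only finitely
many isomorphism classes of generic (right) modules of endolength `d`. -/
def IsGenericallyTameAlg (B : Type u) [Ring B] : Prop :=
  ∀ d : ℕ, ∃ (k : ℕ) (T : Fin k → RawMod Bᵐᵒᵖ),
    ∀ N : RawMod Bᵐᵒᵖ, IsGenericModule Bᵐᵒᵖ N → endolength Bᵐᵒᵖ N = (d : ℕ∞) →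
      ∃ i, Nonempty (N.M ≃ₗ[Bᵐᵒᵖ] (T i).M)

/-- A tame generalized multicoil algebra. -/
def IsTameGeneralizedMulticoilAlgebra (B : Type u) [Ring B] : Prop :=
  IsGeneralizedMulticoilAlgebra B ∧ IsGenericallyTameAlg B

/-- A tame generalized double tilted algebra. -/
def IsTameGeneralizedDoubleTiltedAlgebra (B : Type u) [Ring B] : Prop :=
  IsGeneralizedDoubleTiltedAlgebra B ∧ IsGenericallyTameAlg B

/-! ### The quiver of an algebra, convex idempotents, basic and connected algebras -/

section AlgebraSide

variable (A : Type u) [Ring A]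

/-- The Jacobson radical of `A` (as a left ideal; it is in fact two-sided). -/
def jacobsonRad : Ideal A := (⊥ : Ideal A).jacobson

/-- The square of the Jacobson radical of `A`. -/
def jacobsonRadSq : Ideal A :=
  Ideal.span {x | ∃ a ∈ jacobsonRad A, ∃ b ∈ jacobsonRad A, x = a * b}

/-- A primitive idempotent of `A`. -/
def IsPrimitiveIdempotent (e : A) : Prop :=
  IsIdempotentElem e ∧ e ≠ 0 ∧
    ∀ f g : A, IsIdempotentElem f → IsIdempotentElem g → f * g = 0 → g * f = 0 →
      e = f + g → f = 0 ∨ g = 0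

/-- A complete family of pairwise orthogonal primitive idempotents of `A`; its indices
are the vertices of the quiver `Q_A` of `A`. -/
structure CompleteIdemFamily (A : Type u) [Ring A] where
  n : ℕ
  e : Fin n → A
  prim : ∀ i, IsPrimitiveIdempotent A (e i)
  orth : ∀ i j, i ≠ j → e i * e j = 0
  total : ∑ i, e i = 1

/-- There is an arrow `i → j` in the quiver `Q_A` iff `e_i (rad A) e_j ⊄ (rad A)²`. -/
def QAarrow (E : CompleteIdemFamily A) (i j : Fin E.n) : Prop :=
  ∃ y ∈ jacobsonRad A, E.e i * y * E.e j ∉ jacobsonRadSq A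

/-- A set of vertices of `Q_A` is convex if every path of `Q_A` with source and target in
it has all its vertices in it. -/
def ConvexVertexSet (E : CompleteIdemFamily A) (S : Set (Fin E.n)) : Prop :=
  ∀ (n : ℕ) (c : ℕ → Fin E.n), (∀ k < n, QAarrow A E (c k) (c (k + 1))) →
    c 0 ∈ S → c n ∈ S → ∀ k ≤ n, c k ∈ S

/-- A convex idempotent of `A`: a sum of pairwise orthogonal primitive idempotents
corresponding to the vertices of a convex subquiver of `Q_A`. -/
def IsConvexIdempotent (e : A) : Prop :=
  ∃ (E : CompleteIdemFamily A) (S : Finset (Fin E.n)),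
    ConvexVertexSet A E ↑S ∧ e = ∑ i ∈ S, E.e i

/-- The corner `eAe` of `A` at an idempotent `e`, as a nonunital subring (it is a unital
ring with unit `e`). -/
def cornerRing (e : A) : NonUnitalSubring A where
  carrier := {x | e * x = x ∧ x * e = x}
  zero_mem' := by simp
  add_mem' := by
    rintro a b ⟨ha1, ha2⟩ ⟨hb1, hb2⟩
    constructor
    · rw [mul_add, ha1, hb1]
    · rw [add_mul, ha2, hb2]
  neg_mem' := by
    rintro a ⟨ha1, ha2⟩
    constructor
    · rw [mul_neg, ha1]
    · rw [neg_mul, ha2]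
  mul_mem' := by
    rintro a b ⟨ha1, ha2⟩ ⟨hb1, hb2⟩
    constructor
    · rw [← mul_assoc, ha1]
    · rw [mul_assoc, hb2]

/-- An (indecomposable =) connected algebra: no nontrivial central idempotents. -/
def IsConnectedAlgebra : Prop :=
  Nontrivial A ∧ ∀ e : A, IsIdempotentElem e → e ∈ Set.center A → e = 0 ∨ e = 1

/-- A basic algebra: distinct orthogonal primitive idempotents have nonisomorphic
associated indecomposable projective right modules. -/
def IsBasicAlgebra : Prop :=
  ¬∃ e f : A, IsPrimitiveIdempotent A e ∧ IsPrimitiveIdempotent A f ∧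
    e * f = 0 ∧ f * e = 0 ∧
    Nonempty ((Submodule.span Aᵐᵒᵖ {e} : Submodule Aᵐᵒᵖ A) ≃ₗ[Aᵐᵒᵖ]
      (Submodule.span Aᵐᵒᵖ {f} : Submodule Aᵐᵒᵖ A))

end AlgebraSide

/-! ### Support algebras and faithful algebras of families of vertices -/

section Support

variable (A : Type u) [Ring A]

/-- The radical of a module: the intersection of its maximal submodules. -/
def modRadical (R : Type u) [Ring R] (M : Type u) [AddCommGroup M] [Module R M] :
    Submodule R M :=
  sInf {N | IsCoatom N}

/-- The intersection `ann_A(Γ)` of the annihilators of all right `A`-modules whose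
vertices belong to `Γ`, as a two-sided ideal of `A`. -/
def annTwoSidedIdeal (Γ : Set (ARVertex Aᵐᵒᵖ)) : TwoSidedIdeal A :=
  TwoSidedIdeal.mk'
    {a | ∀ x ∈ Γ, ∀ X : IndecModA Aᵐᵒᵖ, ARVertex.mk X = x →
      ∀ m : X.1.M, MulOpposite.op a • m = 0}
    (by intro x _ X _ m; simp)
    (by
      intro a b ha hb x hx X hX m
      have : MulOpposite.op (a + b) • m = MulOpposite.op a • m + MulOpposite.op b • m := by
        rw [← add_smul]; rfl
      rw [this, ha x hx X hX m, hb x hx X hX m, add_zero])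
    (by
      intro a ha x hx X hX m
      have : MulOpposite.op (-a) • m = -(MulOpposite.op a • m) := by
        rw [← neg_smul]; rfl
      rw [this, ha x hx X hX m, neg_zero])
    (by
      intro a b hb x hx X hX m
      have : MulOpposite.op (a * b) • m = MulOpposite.op b • (MulOpposite.op a • m) := by
        rw [← mul_smul]; rfl
      rw [this, hb x hx X hX _])
    (by
      intro a b ha x hx X hX m
      have : MulOpposite.op (a * b) • m = MulOpposite.op b • (MulOpposite.op a • m) := by
        rw [← mul_smul]; rfl
      rw [this, ha x hx X hX m, smul_zero])

/-- The faithful algebra `B(Γ) = A / ann_A(Γ)` of a family `Γ` of vertices of `Γ_A`. -/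
abbrev faithfulAlg (Γ : Set (ARVertex Aᵐᵒᵖ)) : Type u :=
  (annTwoSidedIdeal A Γ).ringCon.Quotient

/-- The canonical projection `A → B(Γ)`. -/
def faithfulProj (Γ : Set (ARVertex Aᵐᵒᵖ)) : A →+* faithfulAlg A Γ :=
  RingCon.mk' (annTwoSidedIdeal A Γ).ringCon

/-- The trace ideal `t_A(Γ)`: the two-sided ideal of `A` generated by the images of all
homomorphisms of right `A`-modules from `Q` to `A`. -/
def traceIdeal (Q : Submodule Aᵐᵒᵖ A) : TwoSidedIdeal A :=
  TwoSidedIdeal.span (⋃ f : ↥Q →ₗ[Aᵐᵒᵖ] A, Set.range f)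

/-- A decomposition `A = P_Γ ⊕ Q_Γ` of `A` in `mod A` such that the simple summands of
`P_Γ / rad P_Γ` are exactly the simple composition factors of the modules in `Γ`. -/
structure GammaDecomp (A : Type u) [Ring A] (Γ : Set (ARVertex Aᵐᵒᵖ)) where
  P : Submodule Aᵐᵒᵖ A
  Q : Submodule Aᵐᵒᵖ A
  compl : IsCompl P Q
  top_factors : ∀ (S : Type u) [AddCommGroup S] [Module Aᵐᵒᵖ S], IsSimpleModule Aᵐᵒᵖ S →
    (IsCompFactorMod Aᵐᵒᵖ S (↥P ⧸ modRadical Aᵐᵒᵖ ↥P) ↔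
      ∃ x ∈ Γ, ∃ X : IndecModA Aᵐᵒᵖ, ARVertex.mk X = x ∧ IsCompFactorMod Aᵐᵒᵖ S X.1.M)

end Support

/-- Restriction of scalars along a surjective ring homomorphism `π : A → B` identifies a
vertex `y` of `Γ_B` with a vertex `x` of `Γ_A`: representatives have the same underlying
group, with the `A`-action obtained from the `B`-action through `π`. -/
def VertexRestrictsTo {A B : Type u} [Ring A] [Ring B] (π : A →+* B)
    (y : ARVertex Bᵐᵒᵖ) (x : ARVertex Aᵐᵒᵖ) : Prop :=
  ∃ (N : IndecModA Bᵐᵒᵖ) (X : IndecModA Aᵐᵒᵖ), ARVertex.mk N = y ∧ ARVertex.mk X = x ∧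
    ∃ e : X.1.M ≃+ N.1.M, ∀ (a : A) (m : X.1.M),
      e (MulOpposite.op a • m) = MulOpposite.op (π a) • e m

/-! ### `K`-module structures on Hom-groups, lengths, and Ext -/

section KLength

variable (K B : Type u) [CommRing K] [Ring B] [Algebra K B]
variable (X N : Type u) [AddCommGroup X] [Module B X] [AddCommGroup N] [Module B N]

/-- The action of `K` on `B`-linear maps, through `algebraMap K B`. -/
def homKSMul (k : K) (f : X →ₗ[B] N) : X →ₗ[B] N where
  toFun x := algebraMap K B k • f x
  map_add' x y := by show algebraMap K B k • f (x + y) = _; rw [map_add, smul_add]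
  map_smul' b x := by
    simp only [map_smul, RingHom.id_apply, smul_smul]
    rw [Algebra.commutes]

/-- The `K`-module structure on the group of `B`-linear maps. -/
def homKModule : Module K (X →ₗ[B] N) where
  smul := homKSMul K B X N
  one_smul f := LinearMap.ext fun x => by
    show algebraMap K B 1 • f x = f x
    rw [map_one, one_smul]
  mul_smul k l f := LinearMap.ext fun x => by
    show algebraMap K B (k * l) • f x = algebraMap K B k • algebraMap K B l • f x
    rw [map_mul, mul_smul]
  smul_zero k := LinearMap.ext fun x => by
    show algebraMap K B k • (0 : X →ₗ[B] N) x = 0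
    simp
  smul_add k f g := LinearMap.ext fun x => by
    show algebraMap K B k • (f + g) x = algebraMap K B k • f x + algebraMap K B k • g x
    simp [smul_add]
  add_smul k l f := LinearMap.ext fun x => by
    show algebraMap K B (k + l) • f x = algebraMap K B k • f x + algebraMap K B l • f x
    rw [map_add, add_smul]
  zero_smul f := LinearMap.ext fun x => by
    show algebraMap K B 0 • f x = 0
    rw [map_zero, zero_smul]

/-- The length `|Hom_B(X, N)|` of the group of `B`-linear maps `X → N` as a `K`-module. -/
noncomputable def homKLength : WithBot ℕ∞ :=
  letI : Module K (X →ₗ[B] N) := homKModule K B X N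
  Order.krullDim (Submodule K (X →ₗ[B] N))

/-- The canonical surjection from the free module on (the underlying set of) `X` to `X`. -/
noncomputable def freeCover : (X →₀ B) →ₗ[B] X :=
  Finsupp.linearCombination B id

/-- The length `|Ext¹_B(X, N)|` of `Ext¹` as a `K`-module, computed as the cokernel of
`Hom_B(F, N) → Hom_B(Ω X, N)` for the canonical free cover `F → X` with kernel `Ω X`. -/
noncomputable def ext1KLength : WithBot ℕ∞ :=
  letI : Module K (↥(LinearMap.ker (freeCover B X)) →ₗ[B] N) :=
    homKModule K B (↥(LinearMap.ker (freeCover B X))) N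
  let D : Submodule K (↥(LinearMap.ker (freeCover B X)) →ₗ[B] N) :=
    { carrier := {f | ∃ g : (X →₀ B) →ₗ[B] N,
        f = g.comp (LinearMap.ker (freeCover B X)).subtype}
      add_mem' := by
        rintro f₁ f₂ ⟨g₁, rfl⟩ ⟨g₂, rfl⟩
        exact ⟨g₁ + g₂, rfl⟩
      zero_mem' := ⟨0, rfl⟩
      smul_mem' := by
        rintro k f ⟨g, rfl⟩
        exact ⟨homKSMul K B _ N k g, rfl⟩ }
  Order.krullDim (Submodule K ((↥(LinearMap.ker (freeCover B X)) →ₗ[B] N) ⧸ D))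

end KLength

/-- Vanishing of `Ext¹_B(X, N)`: every short exact sequence `0 → N → E → X → 0` splits. -/
def Ext1IsZero (B : Type u) [Ring B] (X : Type u) [AddCommGroup X] [Module B X]
    (N : Type u) [AddCommGroup N] [Module B N] : Prop :=
  ∀ (E : Type u) [AddCommGroup E] [Module B E], ∀ (f : N →ₗ[B] E) (g : E →ₗ[B] X),
    Function.Injective f → Function.Surjective g → LinearMap.range f = LinearMap.ker g →
    ∃ s : X →ₗ[B] E, g.comp s = LinearMap.id

/-- The syzygy `Ω X`: the kernel of the canonical free cover of `X`. -/
noncomputable def syzygyRaw (B : Type u) [Ring B] (X : RawMod B) : RawMod B :=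
  ⟨↥(LinearMap.ker (freeCover B X.M))⟩

/-- Iterated syzygies. -/
noncomputable def syzygyIter (B : Type u) [Ring B] : ℕ → RawMod B → RawMod B
  | 0, X => X
  | n + 1, X => syzygyRaw B (syzygyIter B n X)

/-- Vanishing of `Ext^r_B(X, N)` for `r ≥ 1`, via `Ext^r(X, N) ≅ Ext¹(Ω^{r-1} X, N)`. -/
noncomputable def ExtIsZero (B : Type u) [Ring B] (X N : RawMod B) (r : ℕ) : Prop :=
  Ext1IsZero B (syzygyIter B (r - 1) X).M N.M

/-- `[X] = [M]` in the Grothendieck group `K₀`: the modules `X` and `M` have the same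
composition factors including multiplicities. -/
def SameCompFactors {B : Type u} [Ring B] (X M : ModA B) : Prop :=
  ∃ (n : ℕ) (s : Fin (n + 1) → Submodule B X.M) (t : Fin (n + 1) → Submodule B M.M)
    (σ : Equiv.Perm (Fin n)),
    s 0 = ⊥ ∧ s (Fin.last n) = ⊤ ∧ t 0 = ⊥ ∧ t (Fin.last n) = ⊤ ∧
    (∀ i : Fin n, s i.castSucc ≤ s i.succ) ∧ (∀ i : Fin n, t i.castSucc ≤ t i.succ) ∧
    ∀ i : Fin n,
      IsSimpleModule B (↥(s i.succ) ⧸ (s i.castSucc).comap (s i.succ).subtype) ∧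
      Nonempty ((↥(s i.succ) ⧸ (s i.castSucc).comap (s i.succ).subtype) ≃ₗ[B]
        (↥(t (σ i).succ) ⧸ (t (σ i).castSucc).comap (t (σ i).succ).subtype))

/-- A torsion class in `mod B`: a class of modules closed under factor modules and
extensions. -/
def IsTorsionClass (B : Type u) [Ring B] (T : Set (ModA B)) : Prop :=
  (∀ M ∈ T, ∀ (N : ModA B) (g : M.M →ₗ[B] N.M), Function.Surjective g → N ∈ T) ∧
  ∀ (X E M : ModA B) (f : X.M →ₗ[B] E.M) (g : E.M →ₗ[B] M.M),
    Function.Injective f → Function.Surjective g → LinearMap.range f = LinearMap.ker g →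
    X ∈ T → M ∈ T → E ∈ T

/-- A torsion class is functorially finite iff it is of the form `Fac(M)`. -/
def IsFunctoriallyFinite (B : Type u) [Ring B] (T : Set (ModA B)) : Prop :=
  ∃ M : ModA B,
    T = {N | ∃ (k : ℕ) (g : (Fin k → M.M) →ₗ[B] N.M), Function.Surjective g}

/-- A module `M` is `τ`-rigid if `Hom(M, τM) = 0`. -/
def IsTauRigid {B : Type u} [Ring B] (M : ModA B) : Prop :=
  ∀ N : ModA B, IsTauOf N M → ∀ f : M.M →ₗ[B] N.M, f = 0

/-- A module `M` is rigid if `Ext¹(M, M) = 0`. -/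
def IsRigid {B : Type u} [Ring B] (M : ModA B) : Prop := Ext1IsZero B M.M M.M

/-- `α(M) ≤ 2`: the middle term of any almost split sequence ending at `M` has at most
two indecomposable direct summands. -/
def AlphaLe2 {B : Type u} [Ring B] (M : ModA B) : Prop :=
  ∀ s : AlmostSplitSeq B, s.r.Iso M →
    ∀ (k : ℕ) (N : Fin k → Submodule B s.m.M),
      (∀ i, IsIndecMod B ↥(N i)) → iSupIndep N → (⨆ i, N i) = ⊤ → k ≤ 2

/-!
Say that `M` reaches `N` if there is a path of nonzero homomorphisms between indecomposable modules
from `M` to `N`.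

Any two modules of a cyclic component reach each other. It is enough to reverse an irreducible map
`f : X → Y` between cyclic vertices. Suppose that `f` is injective and not surjective and that `Y`
does not reach `X`, and let `θ : X → X` be a composite of irreducible maps along a cycle through
`X`. No nonzero map leads from `Y` into a module on the cycle, and then every irreducible map `g`
of the cycle has the property that `a` extends along `f` as soon as `g ∘ a` does. Since `θ` is
nilpotent, the zero map `θ ^ n` extends along `f`; hence so does the identity, and `f` splits, which
is absurd. If `f` is surjective and not injective, lift along `f` instead.

If some homomorphism `M → N` is not in the infinite radical, there is a path of irreducible maps
from `M` to `N`. Applied to the homomorphisms on the cycles through a cycle-finite module of `Γ`,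
this shows that a module which reaches `Γ` and is reached from `Γ` lies in `Γ`.

Finally let a path of the quiver start and end in the support of `Γ` and leave it at a vertex `i`.
Then the simple module `S_i` reaches `Γ`, as one sees by moving along the path from its start: for
an arrow `i → j`, the simple module `S_j` reaches `S_i`, and if `j` is not in the support it reaches
every `X` in `Γ` with `X e_i ≠ 0`. Dually `S_i` is reached from `Γ`. So `S_i` is in `Γ`, and `i` is
in the support.
-/

/-! ### Indecomposable modules -/

section Indecomposable

variable {R : Type u} [Ring R]

/-- A finite length module, bundled as an object of `ModA R`. -/
abbrev ModA.of (R : Type u) [Ring R] (M : Type u) [AddCommGroup M] [Module R M]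
    [IsNoetherian R M] [IsArtinian R M] : ModA R :=
  ⟨M, isFiniteLength_iff_isNoetherian_isArtinian.mpr ⟨inferInstance, inferInstance⟩⟩

instance (X : ModA R) : IsNoetherian R X.M :=
  (isFiniteLength_iff_isNoetherian_isArtinian.mp X.finLen).1

instance (X : ModA R) : IsArtinian R X.M :=
  (isFiniteLength_iff_isNoetherian_isArtinian.mp X.finLen).2

variable {M N : Type u} [AddCommGroup M] [Module R M] [AddCommGroup N] [Module R N]

theorem isIndecMod_iff_isCompl :
    IsIndecMod R M ↔
      Nontrivial M ∧ ∀ P Q : Submodule R M, IsCompl P Q → P = ⊥ ∨ Q = ⊥ := by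
  refine and_congr_right fun _ => ⟨fun h P Q hPQ => ?_, fun h f hf => ?_⟩
  · refine (h _ (Submodule.isIdempotentElem_projection hPQ)).imp (fun h0 => ?_) (fun h1 => ?_)
    · rw [← Submodule.range_projection hPQ, h0, LinearMap.range_zero]
    · rw [← Submodule.ker_projection hPQ, h1]
      exact LinearMap.ker_id
  · refine (h _ _ (LinearMap.IsIdempotentElem.isCompl hf)).imp LinearMap.range_eq_bot.mp
      fun hker => LinearMap.ext fun x => ?_
    exact LinearMap.ker_eq_bot.mp hker (LinearMap.congr_fun hf x)

theorem IsIndecMod.bijective_or_isNilpotent [IsNoetherian R M] [IsArtinian R M]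
    (hM : IsIndecMod R M) (f : Module.End R M) : Function.Bijective f ∨ IsNilpotent f := by
  obtain ⟨n, hn, hn0⟩ :=
    (f.eventually_isCompl_ker_pow_range_pow.and (Filter.eventually_ne_atTop 0)).exists
  refine ((isIndecMod_iff_isCompl.mp hM).2 _ _ hn).imp (fun hker => ?_)
    fun hrange => ⟨n, LinearMap.range_eq_bot.mp hrange⟩
  refine IsArtinian.bijective_of_injective_endomorphism f (LinearMap.ker_eq_bot.mp ?_)
  refine eq_bot_iff.mpr (le_trans (fun x hx => ?_) hker.le)
  exact Module.End.pow_map_zero_of_le (Nat.one_le_iff_ne_zero.mpr hn0)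
    ((pow_one f).symm ▸ hx)

theorem IsIndecMod.bijective_of_comp_eq_id (hN : IsIndecMod R N) (hM : Nontrivial M)
    {f : M →ₗ[R] N} {r : N →ₗ[R] M} (hr : r ∘ₗ f = LinearMap.id) : Function.Bijective f := by
  have hinv : Function.LeftInverse r f := LinearMap.congr_fun hr
  have hidem : (f ∘ₗ r : Module.End R N) * (f ∘ₗ r) = f ∘ₗ r :=
    LinearMap.ext fun y => congrArg f (hinv (r y))
  refine ⟨hinv.injective, ?_⟩
  rcases hN.2 _ hidem with h0 | h1
  · obtain ⟨x, hx⟩ := exists_ne (0 : M)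
    have hfx : f (r (f x)) = 0 := LinearMap.congr_fun h0 (f x)
    rw [hinv x] at hfx
    exact absurd (hinv.injective (hfx.trans (map_zero f).symm)) hx
  · exact fun y => ⟨r y, LinearMap.congr_fun h1 y⟩

end Indecomposable

/-! ### The radical of the module category -/

section Radical

variable {R : Type u} [Ring R] {X Y Z : ModA R}

theorem SplitMonoMap.bijective {f : X.M →ₗ[R] Y.M} (hf : SplitMonoMap f)
    (hX : Nontrivial X.M) (hY : Y.IsIndec) : Function.Bijective f :=
  let ⟨_, hr⟩ := hf
  IsIndecMod.bijective_of_comp_eq_id hY hX hr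

theorem SplitEpiMap.bijective {f : X.M →ₗ[R] Y.M} (hf : SplitEpiMap f)
    (hX : X.IsIndec) (hY : Nontrivial Y.M) : Function.Bijective f := by
  obtain ⟨s, hs⟩ := hf
  have hfs : f ∘ s = id := funext (LinearMap.congr_fun hs)
  rw [← Function.Bijective.of_comp_iff f (IsIndecMod.bijective_of_comp_eq_id hX hY hs), hfs]
  exact Function.bijective_id

theorem SplitMonoMap.of_comp_bijective {f : X.M →ₗ[R] Y.M} {g : Y.M →ₗ[R] Z.M}
    (h : Function.Bijective (g ∘ₗ f)) : SplitMonoMap f :=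
  ⟨(LinearEquiv.ofBijective _ h).symm ∘ₗ g,
    LinearMap.ext (LinearEquiv.ofBijective _ h).symm_apply_apply⟩

theorem SplitEpiMap.of_comp_bijective {f : X.M →ₗ[R] Y.M} {g : Y.M →ₗ[R] Z.M}
    (h : Function.Bijective (g ∘ₗ f)) : SplitEpiMap g :=
  ⟨f ∘ₗ (LinearEquiv.ofBijective _ h).symm.toLinearMap,
    LinearMap.ext (LinearEquiv.ofBijective _ h).apply_symm_apply⟩

theorem InRad.of_not_splitMonoMap (hX : X.IsIndec) {f : X.M →ₗ[R] Y.M}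
    (hf : ¬SplitMonoMap f) : InRad f := by
  intro W hW g h hbij
  have hg : Function.Bijective g :=
    (SplitMonoMap.of_comp_bijective (g := h ∘ₗ f) hbij).bijective hW.1 hX
  exact hf (.of_comp_bijective (g := h) ((Function.Bijective.of_comp_iff _ hg).mp hbij))

theorem InRad.of_not_splitEpiMap (hY : Y.IsIndec) {f : X.M →ₗ[R] Y.M}
    (hf : ¬SplitEpiMap f) : InRad f := by
  intro W hW g h hbij
  have hh : Function.Bijective h :=
    (SplitEpiMap.of_comp_bijective (f := f ∘ₗ g) hbij).bijective hY hW.1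
  exact hf (.of_comp_bijective (f := g) ((Function.Bijective.of_comp_iff' hh _).mp hbij))

theorem InRad.of_not_bijective (hX : X.IsIndec) (hY : Y.IsIndec) {f : X.M →ₗ[R] Y.M}
    (hf : ¬Function.Bijective f) : InRad f :=
  .of_not_splitMonoMap hX fun h => hf (h.bijective hX.1 hY)

theorem InRad.not_splitMonoMap {f : X.M →ₗ[R] Y.M} (hf : InRad f) (hX : X.IsIndec) :
    ¬SplitMonoMap f := by
  rintro ⟨r, hr⟩
  refine hf X hX LinearMap.id r ?_
  rw [LinearMap.comp_id, hr]
  exact Function.bijective_id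

theorem InRad.not_splitEpiMap {f : X.M →ₗ[R] Y.M} (hf : InRad f) (hY : Y.IsIndec) :
    ¬SplitEpiMap f := by
  rintro ⟨s, hs⟩
  refine hf Y hY s LinearMap.id ?_
  rw [LinearMap.id_comp, hs]
  exact Function.bijective_id

theorem InRad.not_bijective {f : X.M →ₗ[R] X.M} (hf : InRad f) (hX : X.IsIndec) :
    ¬Function.Bijective f :=
  hf X hX LinearMap.id LinearMap.id

theorem InRad.comp_left {f : X.M →ₗ[R] Y.M} (hf : InRad f) (g : Y.M →ₗ[R] Z.M) :
    InRad (X := X) (Y := Z) (g ∘ₗ f) :=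
  fun W hW k l => hf W hW k (l ∘ₗ g)

theorem InRad.comp_right {f : Y.M →ₗ[R] Z.M} (hf : InRad f) (g : X.M →ₗ[R] Y.M) :
    InRad (X := X) (Y := Z) (f ∘ₗ g) :=
  fun W hW k l => hf W hW (g ∘ₗ k) l

theorem IsIrred.inRad {f : X.M →ₗ[R] Y.M} (hf : IsIrred f) (hX : X.IsIndec) : InRad f :=
  .of_not_splitMonoMap hX hf.1

theorem comp_mem_radPow_succ {n : ℕ} {g : X.M →ₗ[R] Z.M} {h : Z.M →ₗ[R] Y.M}
    (hg : InRad g) (hh : h ∈ radPow R n Z Y) : h ∘ₗ g ∈ radPow R (n + 1) X Y :=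
  AddSubgroup.subset_closure ⟨Z, g, h, hg, hh, rfl⟩

theorem comp_mem_radPow {n : ℕ} {h : Y.M →ₗ[R] Z.M} (hh : h ∈ radPow R n Y Z)
    (g : X.M →ₗ[R] Y.M) : h ∘ₗ g ∈ radPow R n X Z := by
  cases n with
  | zero => exact AddSubgroup.mem_top _
  | succ n =>
    induction hh using AddSubgroup.closure_induction with
    | mem h hh =>
      obtain ⟨W, k, l, hk, hl, rfl⟩ := hh
      exact comp_mem_radPow_succ (g := k ∘ₗ g) (hk.comp_right g) hl
    | zero => rw [LinearMap.zero_comp]; exact AddSubgroup.zero_mem _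
    | add a b _ _ ha hb => rw [LinearMap.add_comp]; exact AddSubgroup.add_mem _ ha hb
    | neg a _ ha => rw [LinearMap.neg_comp]; exact AddSubgroup.neg_mem _ ha

/-- The elementwise form of the decomposition of a finite length module into
indecomposable ones. -/
theorem comp_mem_of_forall_indec (S : AddSubgroup (X.M →ₗ[R] Y.M)) (Z : ModA R)
    (g : X.M →ₗ[R] Z.M) (h : Z.M →ₗ[R] Y.M)
    (H : ∀ W : ModA R, W.IsIndec → ∀ (p : Z.M →ₗ[R] W.M) (i : W.M →ₗ[R] Z.M),
      (h ∘ₗ i) ∘ₗ (p ∘ₗ g) ∈ S) : h ∘ₗ g ∈ S := by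
  induction hl : Module.length R Z.M using WellFoundedLT.induction generalizing Z with
  | ind l ih =>
    by_cases hZ : Z.IsIndec
    · exact H Z hZ LinearMap.id LinearMap.id
    rcases subsingleton_or_nontrivial Z.M with _ | hZnt
    · rw [Subsingleton.elim g 0, LinearMap.comp_zero]
      exact S.zero_mem
    obtain ⟨P, Q, hPQ, hP, hQ⟩ : ∃ P Q : Submodule R Z.M, IsCompl P Q ∧ P ≠ ⊥ ∧ Q ≠ ⊥ := by
      by_contra! hcon
      exact hZ (isIndecMod_iff_isCompl.mpr
        ⟨hZnt, fun P Q hPQ => or_iff_not_imp_left.mpr (hcon P Q hPQ)⟩)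
    have summand_mem {P' Q' : Submodule R Z.M} (hc : IsCompl P' Q') (hQ' : Q' ≠ ⊥) :
        (h ∘ₗ P'.subtype) ∘ₗ (P'.projectionOnto Q' hc ∘ₗ g) ∈ S := by
      refine ih _ ?_ (ModA.of R P') _ _ (fun W hW p i => ?_) rfl
      · rw [← hl]
        exact Submodule.length_lt fun htop => hQ' (eq_bot_of_top_isCompl (htop ▸ hc))
      · exact H W hW (p ∘ₗ P'.projectionOnto Q' hc) (P'.subtype ∘ₗ i)
    have hsum : h ∘ₗ g = (h ∘ₗ P.subtype) ∘ₗ (P.projectionOnto Q hPQ ∘ₗ g) +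
        (h ∘ₗ Q.subtype) ∘ₗ (Q.projectionOnto P hPQ.symm ∘ₗ g) := by
      refine LinearMap.ext fun x => ?_
      have hx := Submodule.projection_add_projection_eq_self hPQ (g x)
      exact ((map_add h _ _).symm.trans (congrArg h hx)).symm
    rw [hsum]
    exact S.add_mem (summand_mem hPQ hQ) (summand_mem hPQ.symm hP)

theorem exists_indec_comp_notMem {n : ℕ} {f : X.M →ₗ[R] Y.M}
    (hf : f ∈ radPow R (n + 1) X Y) {S : AddSubgroup (X.M →ₗ[R] Y.M)} (hfS : f ∉ S) :
    ∃ (W : ModA R) (g : X.M →ₗ[R] W.M) (h : W.M →ₗ[R] Y.M),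
      W.IsIndec ∧ InRad g ∧ h ∈ radPow R n W Y ∧ h ∘ₗ g ∉ S := by
  by_contra! hcon
  refine hfS ((AddSubgroup.closure_le _).mpr ?_ hf)
  rintro _ ⟨Z, g, h, hg, hh, rfl⟩
  exact comp_mem_of_forall_indec S Z g h fun W hW p i =>
    hcon W (p ∘ₗ g) (h ∘ₗ i) hW (hg.comp_left p) (comp_mem_radPow hh i)

theorem IsIrred.of_comp_notMem_radPow {n : ℕ} (hX : X.IsIndec) (hZ : Z.IsIndec)
    {g : X.M →ₗ[R] Z.M} {h : Z.M →ₗ[R] Y.M} (hg : InRad g) (hh : h ∈ radPow R n Z Y)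
    (hn : h ∘ₗ g ∉ radPow R (n + 2) X Y) : IsIrred g := by
  refine ⟨hg.not_splitMonoMap hX, hg.not_splitEpiMap hZ, fun W v w hwv => ?_⟩
  by_contra! hcon
  refine hn ?_
  rw [← hwv, ← LinearMap.comp_assoc]
  exact comp_mem_radPow_succ (.of_not_splitMonoMap hX hcon.1)
    (comp_mem_radPow_succ (.of_not_splitEpiMap hZ hcon.2) hh)

theorem reflTransGen_arArrow_of_mem_radPow {n : ℕ} {X Y : IndecModA R}
    {f : X.1.M →ₗ[R] Y.1.M} (hf : f ∈ radPow R n X.1 Y.1)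
    (hf' : f ∉ radPow R (n + 1) X.1 Y.1) :
    Relation.ReflTransGen ARArrow (ARVertex.mk X) (ARVertex.mk Y) := by
  induction n generalizing X with
  | zero =>
    have hbij : Function.Bijective f := by
      by_contra hbij
      exact hf' (comp_mem_radPow_succ (h := LinearMap.id)
        (InRad.of_not_bijective X.2 Y.2 hbij) (AddSubgroup.mem_top _))
    have hXY : ARVertex.mk X = ARVertex.mk Y :=
      Quotient.sound ⟨LinearEquiv.ofBijective f hbij⟩
    rw [hXY]
  | succ n ih =>
    obtain ⟨W, g, h, hW, hg, hh, hgh⟩ := exists_indec_comp_notMem hf hf'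
    refine .head ⟨X, ⟨W, hW⟩, g, .of_comp_notMem_radPow X.2 hW hg hh hgh, rfl, rfl⟩ ?_
    exact ih (X := ⟨W, hW⟩) hh fun hh' => hgh (comp_mem_radPow_succ hg hh')

theorem reflTransGen_arArrow_of_not_inRadInf {X Y : IndecModA R} {f : X.1.M →ₗ[R] Y.1.M}
    (hf : ¬InRadInf f) : Relation.ReflTransGen ARArrow (ARVertex.mk X) (ARVertex.mk Y) := by
  by_contra hpath
  refine hf fun n => ?_
  induction n with
  | zero => exact AddSubgroup.mem_top _
  | succ n ih =>
    by_contra hn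
    exact hpath (reflTransGen_arArrow_of_mem_radPow ih hn)

end Radical

/-! ### Extending along an irreducible monomorphism -/

section Extension

variable {R : Type u} [Ring R]

/-- The map `a` extends along `f`, that is, `a = v ∘ f` for some `v`. -/
def ExtendsAlong {X Y Z : Type*} [AddCommGroup X] [Module R X] [AddCommGroup Y] [Module R Y]
    [AddCommGroup Z] [Module R Z] (f : X →ₗ[R] Y) (a : X →ₗ[R] Z) : Prop :=
  ∃ v : Y →ₗ[R] Z, v ∘ₗ f = a

/-- The map `b` lifts along `f`, that is, `b = f ∘ v` for some `v`. -/
def LiftsAlong {X Y Z : Type*} [AddCommGroup X] [Module R X] [AddCommGroup Y] [Module R Y]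
    [AddCommGroup Z] [Module R Z] (f : X →ₗ[R] Y) (b : Z →ₗ[R] Y) : Prop :=
  ∃ v : Z →ₗ[R] X, f ∘ₗ v = b

theorem exists_comp_eq_of_ker_le_ker {M N P : Type*} [AddCommGroup M] [Module R M]
    [AddCommGroup N] [Module R N] [AddCommGroup P] [Module R P] {q : M →ₗ[R] N}
    (hq : Function.Surjective q) {k : M →ₗ[R] P} (hk : LinearMap.ker q ≤ LinearMap.ker k) :
    ∃ ζ : N →ₗ[R] P, ζ ∘ₗ q = k := by
  refine ⟨(LinearMap.ker q).liftQ k hk ∘ₗ (q.quotKerEquivOfSurjective hq).symm.toLinearMap,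
    LinearMap.ext fun x => ?_⟩
  have hx : (q.quotKerEquivOfSurjective hq).symm (q x) = (LinearMap.ker q).mkQ x :=
    (LinearEquiv.symm_apply_eq _).mpr rfl
  exact congrArg ((LinearMap.ker q).liftQ k hk) hx

theorem exists_comp_eq_of_range_le_range {M N P : Type*} [AddCommGroup M] [Module R M]
    [AddCommGroup N] [Module R N] [AddCommGroup P] [Module R P] {i : M →ₗ[R] N}
    (hi : Function.Injective i) {k : P →ₗ[R] N} (hk : LinearMap.range k ≤ LinearMap.range i) :
    ∃ ζ : P →ₗ[R] M, i ∘ₗ ζ = k := by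
  refine ⟨(LinearEquiv.ofInjective i hi).symm.toLinearMap ∘ₗ
    k.codRestrict (LinearMap.range i) fun x => hk ⟨x, rfl⟩, LinearMap.ext fun x => ?_⟩
  exact congrArg Subtype.val ((LinearEquiv.ofInjective i hi).apply_symm_apply _)

variable {X Y Z W : ModA R}

/-- Since `a` does not extend along `f`, the map `Z → (Y × Z) / X` does not split, so the
irreducible `g` makes `(Y × Z) / X → W` split; the preimage `Q` of a section in `Y × Z` is then
an extension of `W` by the image of `X`. -/
theorem IsIrred.exists_exact_of_not_extendsAlong {f : X.M →ₗ[R] Y.M} {a : X.M →ₗ[R] Z.M}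
    {g : Z.M →ₗ[R] W.M} (hg : IsIrred g) (ha : ¬ExtendsAlong f a) (hga : g ∘ₗ a = 0) :
    ∃ (Q : ModA R) (ι : X.M →ₗ[R] Q.M) (p : Q.M →ₗ[R] Y.M) (k : Q.M →ₗ[R] Z.M),
      p ∘ₗ ι = f ∧ k ∘ₗ ι = a ∧ Function.Surjective (g ∘ₗ k) ∧
        LinearMap.ker (g ∘ₗ k) ≤ LinearMap.range ι := by
  let D : Submodule R (Y.M × Z.M) := LinearMap.range (f.prod a)
  have mkQ_prod (x : X.M) : D.mkQ (f x, a x) = 0 :=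
    (Submodule.Quotient.mk_eq_zero D).mpr ⟨x, rfl⟩
  have hga' (x : X.M) : g (a x) = 0 := LinearMap.congr_fun hga x
  let j : Z.M →ₗ[R] (Y.M × Z.M) ⧸ D := D.mkQ ∘ₗ LinearMap.inr R Y.M Z.M
  let g' : ((Y.M × Z.M) ⧸ D) →ₗ[R] W.M := D.liftQ (g ∘ₗ LinearMap.snd R Y.M Z.M) <| by
    rintro _ ⟨x, rfl⟩
    exact hga' x
  have hj : ¬SplitMonoMap (X := Z) (Y := .of R ((Y.M × Z.M) ⧸ D)) j := by
    rintro ⟨r, hr⟩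
    refine ha ⟨-(r ∘ₗ D.mkQ ∘ₗ LinearMap.inl R Y.M Z.M), LinearMap.ext fun x => ?_⟩
    have hsum : D.mkQ (f x, 0) + D.mkQ (0, a x) = 0 := by
      rw [← map_add, Prod.mk_add_mk, add_zero, zero_add, mkQ_prod]
    calc -r (D.mkQ (f x, 0)) = r (D.mkQ (0, a x)) := by
          rw [eq_neg_of_add_eq_zero_left hsum, map_neg, neg_neg]
      _ = a x := LinearMap.congr_fun hr (a x)
  obtain ⟨s, hs⟩ : SplitEpiMap (X := .of R ((Y.M × Z.M) ⧸ D)) (Y := W) g' :=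
    (hg.2.2 (.of R _) j g' rfl).resolve_left hj
  let Q : Submodule R (Y.M × Z.M) := LinearMap.eqLocus D.mkQ (s ∘ₗ g ∘ₗ LinearMap.snd R Y.M Z.M)
  have hι (x : X.M) : f.prod a x ∈ Q := by
    change D.mkQ (f x, a x) = s (g (a x))
    rw [mkQ_prod, hga', map_zero]
  refine ⟨.of R Q, (f.prod a).codRestrict Q hι, LinearMap.fst R Y.M Z.M ∘ₗ Q.subtype,
    LinearMap.snd R Y.M Z.M ∘ₗ Q.subtype, rfl, rfl, fun w => ?_, fun d hd => ?_⟩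
  · obtain ⟨d, hd⟩ := D.mkQ_surjective (s w)
    have hgd : g d.2 = w := (congrArg g' hd).trans (LinearMap.congr_fun hs w)
    exact ⟨⟨d, hd.trans (congrArg s hgd).symm⟩, hgd⟩
  · have hd0 : D.mkQ d.1 = 0 := d.2.trans ((congrArg s hd).trans (map_zero s))
    obtain ⟨x, hx⟩ := (Submodule.Quotient.mk_eq_zero D).mp hd0
    exact ⟨x, Subtype.ext hx⟩

theorem IsIrred.exists_ne_zero_of_not_extendsAlong {f : X.M →ₗ[R] Y.M} (hf : IsIrred f)
    (hfs : ¬Function.Surjective f) {a : X.M →ₗ[R] Z.M} (ha : ¬ExtendsAlong f a)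
    {g : Z.M →ₗ[R] W.M} (hg : IsIrred g) (hga : g ∘ₗ a = 0) :
    ∃ v : Y.M →ₗ[R] W.M, v ≠ 0 := by
  obtain ⟨Q, ι, p, k, hpι, hkι, hsurj, hker⟩ := hg.exists_exact_of_not_extendsAlong ha hga
  rcases hf.2.2 Q ι p hpι with ⟨ρ, hρ⟩ | ⟨σ, hσ⟩
  · have hk : LinearMap.ker (g ∘ₗ k) ≤ LinearMap.ker (k - a ∘ₗ ρ) := by
      refine hker.trans (LinearMap.range_le_ker_iff.mpr ?_)
      rw [LinearMap.sub_comp, hkι, LinearMap.comp_assoc, hρ, LinearMap.comp_id, sub_self]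
    obtain ⟨ζ, hζ⟩ := exists_comp_eq_of_ker_le_ker hsurj hk
    refine absurd ⟨ζ, (LinearMap.cancel_right hsurj).mp ?_⟩ hg.2.1
    rw [LinearMap.comp_assoc, hζ, LinearMap.comp_sub, ← LinearMap.comp_assoc, hga,
      LinearMap.zero_comp, sub_zero, LinearMap.id_comp]
  · refine ⟨(g ∘ₗ k) ∘ₗ σ, fun h0 => hfs fun y => ?_⟩
    obtain ⟨x, hx⟩ := hker (LinearMap.congr_fun h0 y)
    refine ⟨x, ?_⟩
    rw [← hpι, LinearMap.comp_apply, hx]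
    exact LinearMap.congr_fun hσ y

theorem IsIrred.extendsAlong_of_comp {f : X.M →ₗ[R] Y.M} (hf : IsIrred f)
    (hfs : ¬Function.Surjective f) {g : Z.M →ₗ[R] W.M} (hg : IsIrred g)
    (hYW : ∀ v : Y.M →ₗ[R] W.M, v = 0) {a : X.M →ₗ[R] Z.M}
    (hga : ExtendsAlong f (g ∘ₗ a)) : ExtendsAlong f a := by
  obtain ⟨v, hv⟩ := hga
  by_contra ha
  rw [hYW v, LinearMap.zero_comp] at hv
  obtain ⟨w, hw⟩ := hf.exists_ne_zero_of_not_extendsAlong hfs ha hg hv.symm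
  exact hw (hYW w)

theorem ExtendsAlong.comp {f : X.M →ₗ[R] Y.M} {a : X.M →ₗ[R] Z.M} (ha : ExtendsAlong f a)
    (g : Z.M →ₗ[R] W.M) : ExtendsAlong f (g ∘ₗ a) :=
  let ⟨v, hv⟩ := ha
  ⟨g ∘ₗ v, by rw [LinearMap.comp_assoc, hv]⟩

theorem extendsAlong_equiv_comp {f : X.M →ₗ[R] Y.M} {a : X.M →ₗ[R] Z.M}
    (e : Z.M ≃ₗ[R] W.M) : ExtendsAlong f (e.toLinearMap ∘ₗ a) ↔ ExtendsAlong f a := by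
  refine ⟨fun h => ?_, fun h => h.comp e.toLinearMap⟩
  have h' := h.comp e.symm.toLinearMap
  rwa [← LinearMap.comp_assoc, LinearEquiv.symm_comp, LinearMap.id_comp] at h'

theorem splitMonoMap_of_isNilpotent {f : X.M →ₗ[R] Y.M} {θ : Module.End R X.M}
    (hθ : IsNilpotent θ)
    (H : ∀ a : X.M →ₗ[R] X.M, ExtendsAlong f (θ ∘ₗ a) → ExtendsAlong f a) :
    SplitMonoMap f := by
  obtain ⟨n, hn⟩ := hθ
  have hpow : ExtendsAlong f (θ ^ n) := ⟨0, by rw [hn, LinearMap.zero_comp]⟩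
  clear hn
  induction n with
  | zero => exact hpow
  | succ n ih => exact ih (H _ (by rwa [pow_succ'] at hpow))

/-! ### Lifting along an irreducible epimorphism -/

theorem IsIrred.exists_exact_of_not_liftsAlong {f : X.M →ₗ[R] Y.M} {b : Z.M →ₗ[R] Y.M}
    {g : W.M →ₗ[R] Z.M} (hg : IsIrred g) (hb : ¬LiftsAlong f b) (hbg : b ∘ₗ g = 0) :
    ∃ (Q : ModA R) (i : X.M →ₗ[R] Q.M) (q : Q.M →ₗ[R] Y.M) (k : Z.M →ₗ[R] Q.M),
      q ∘ₗ i = f ∧ q ∘ₗ k = b ∧ Function.Injective (k ∘ₗ g) ∧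
        LinearMap.ker q ≤ LinearMap.range (k ∘ₗ g) := by
  let D : Submodule R (X.M × Z.M) := LinearMap.ker (f.coprod b)
  let g' : W.M →ₗ[R] D := (LinearMap.inr R X.M Z.M ∘ₗ g).codRestrict D fun w => by
    change f 0 + b (g w) = 0
    rw [map_zero, zero_add]
    exact LinearMap.congr_fun hbg w
  let p : D →ₗ[R] Z.M := LinearMap.snd R X.M Z.M ∘ₗ D.subtype
  have hp : ¬SplitEpiMap (X := .of R D) (Y := Z) p := by
    rintro ⟨s, hs⟩
    refine hb ⟨-(LinearMap.fst R X.M Z.M ∘ₗ D.subtype ∘ₗ s), LinearMap.ext fun z => ?_⟩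
    have hsum : f (s z).1.1 + b (s z).1.2 = 0 := (s z).2
    calc f (-(s z).1.1) = b (s z).1.2 := by
          rw [map_neg, eq_neg_of_add_eq_zero_left hsum, neg_neg]
      _ = b z := congrArg b (LinearMap.congr_fun hs z)
  obtain ⟨r, hr⟩ : SplitMonoMap (X := W) (Y := .of R D) g' :=
    (hg.2.2 (.of R D) g' p rfl).resolve_right hp
  have hr' (w : W.M) : r (g' w) = w := LinearMap.congr_fun hr w
  let N : Submodule R (X.M × Z.M) := (LinearMap.ker r).map D.subtype
  have hN : N ≤ D := Submodule.map_subtype_le _ _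
  refine ⟨.of R ((X.M × Z.M) ⧸ N), N.mkQ ∘ₗ LinearMap.inl R X.M Z.M, N.liftQ (f.coprod b) hN,
    N.mkQ ∘ₗ LinearMap.inr R X.M Z.M, ?_, ?_, ?_, ?_⟩
  · rw [← LinearMap.comp_assoc, Submodule.liftQ_mkQ, LinearMap.coprod_inl]
  · rw [← LinearMap.comp_assoc, Submodule.liftQ_mkQ, LinearMap.coprod_inr]
  · refine (injective_iff_map_eq_zero _).mpr fun w hw => ?_
    obtain ⟨d, hd, hdw⟩ := (Submodule.Quotient.mk_eq_zero N).mp hw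
    have hdg : d = g' w := Subtype.ext hdw
    rw [← hr' w, ← hdg]
    exact hd
  · intro c hc
    obtain ⟨d, rfl⟩ := N.mkQ_surjective c
    have hd : d ∈ D := hc
    refine ⟨r ⟨d, hd⟩, ((Submodule.Quotient.eq N).mpr ?_).symm⟩
    refine ⟨⟨d, hd⟩ - g' (r ⟨d, hd⟩), ?_, rfl⟩
    rw [SetLike.mem_coe, LinearMap.mem_ker, map_sub, hr', sub_self]

theorem IsIrred.exists_ne_zero_of_not_liftsAlong {f : X.M →ₗ[R] Y.M} (hf : IsIrred f)
    (hfi : ¬Function.Injective f) {b : Z.M →ₗ[R] Y.M} (hb : ¬LiftsAlong f b)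
    {g : W.M →ₗ[R] Z.M} (hg : IsIrred g) (hbg : b ∘ₗ g = 0) :
    ∃ v : W.M →ₗ[R] X.M, v ≠ 0 := by
  obtain ⟨Q, i, q, k, hqi, hqk, hinj, hker⟩ := hg.exists_exact_of_not_liftsAlong hb hbg
  rcases hf.2.2 Q i q hqi with ⟨ρ, hρ⟩ | ⟨σ, hσ⟩
  · refine ⟨ρ ∘ₗ k ∘ₗ g, fun h0 => hfi ((injective_iff_map_eq_zero f).mpr fun x hx => ?_)⟩
    obtain ⟨w, hw⟩ := hker ((LinearMap.congr_fun hqi x).trans hx)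
    calc x = ρ (i x) := (LinearMap.congr_fun hρ x).symm
      _ = ρ ((k ∘ₗ g) w) := by rw [hw]
      _ = 0 := LinearMap.congr_fun h0 w
  · have hk : LinearMap.range (k - σ ∘ₗ b) ≤ LinearMap.range (k ∘ₗ g) := by
      refine le_trans (LinearMap.range_le_ker_iff.mpr ?_) hker
      rw [LinearMap.comp_sub, hqk, ← LinearMap.comp_assoc, hσ, LinearMap.id_comp, sub_self]
    obtain ⟨ζ, hζ⟩ := exists_comp_eq_of_range_le_range hinj hk
    refine absurd ⟨ζ, (LinearMap.cancel_left hinj).mp ?_⟩ hg.1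
    rw [← LinearMap.comp_assoc, hζ, LinearMap.sub_comp,
      LinearMap.comp_assoc, hbg, LinearMap.comp_zero, sub_zero, LinearMap.comp_id]

theorem IsIrred.liftsAlong_of_comp {f : X.M →ₗ[R] Y.M} (hf : IsIrred f)
    (hfi : ¬Function.Injective f) {g : W.M →ₗ[R] Z.M} (hg : IsIrred g)
    (hWX : ∀ v : W.M →ₗ[R] X.M, v = 0) {b : Z.M →ₗ[R] Y.M}
    (hbg : LiftsAlong f (b ∘ₗ g)) : LiftsAlong f b := by
  obtain ⟨v, hv⟩ := hbg
  by_contra hb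
  rw [hWX v, LinearMap.comp_zero] at hv
  obtain ⟨w, hw⟩ := hf.exists_ne_zero_of_not_liftsAlong hfi hb hg hv.symm
  exact hw (hWX w)

theorem LiftsAlong.comp {f : X.M →ₗ[R] Y.M} {b : Z.M →ₗ[R] Y.M} (hb : LiftsAlong f b)
    (g : W.M →ₗ[R] Z.M) : LiftsAlong f (b ∘ₗ g) :=
  let ⟨v, hv⟩ := hb
  ⟨v ∘ₗ g, by rw [← LinearMap.comp_assoc, hv]⟩

theorem liftsAlong_comp_equiv {f : X.M →ₗ[R] Y.M} {b : Z.M →ₗ[R] Y.M}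
    (e : W.M ≃ₗ[R] Z.M) : LiftsAlong f (b ∘ₗ e.toLinearMap) ↔ LiftsAlong f b := by
  refine ⟨fun h => ?_, fun h => h.comp e.toLinearMap⟩
  have h' := h.comp e.symm.toLinearMap
  rwa [LinearMap.comp_assoc, LinearEquiv.comp_symm, LinearMap.comp_id] at h'

theorem splitEpiMap_of_isNilpotent {f : X.M →ₗ[R] Y.M} {θ : Module.End R Y.M}
    (hθ : IsNilpotent θ)
    (H : ∀ b : Y.M →ₗ[R] Y.M, LiftsAlong f (b ∘ₗ θ) → LiftsAlong f b) :
    SplitEpiMap f := by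
  obtain ⟨n, hn⟩ := hθ
  have hpow : LiftsAlong f (θ ^ n) := ⟨0, by rw [hn, LinearMap.comp_zero]⟩
  clear hn
  induction n with
  | zero => exact hpow
  | succ n ih => exact ih (H _ (by rwa [pow_succ] at hpow))

end Extension

/-! ### Paths of nonzero homomorphisms -/

section HomPath

variable {R : Type u} [Ring R]

/-- There is a nonzero nonisomorphism from a module of class `x` to one of class `y`. These are
the steps of the cycles in `ModCycle`. -/
def HomStep (x y : ARVertex R) : Prop :=
  ∃ (X Y : IndecModA R) (f : X.1.M →ₗ[R] Y.1.M),
    f ≠ 0 ∧ ¬Function.Bijective f ∧ ARVertex.mk X = x ∧ ARVertex.mk Y = y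

/-- A path of nonzero nonisomorphisms between indecomposable modules; paths of length zero are
allowed. -/
abbrev HomPath : ARVertex R → ARVertex R → Prop := Relation.ReflTransGen HomStep

theorem nonempty_equiv_of_mk_eq {X Y : IndecModA R} (h : ARVertex.mk X = ARVertex.mk Y) :
    Nonempty (X.1.M ≃ₗ[R] Y.1.M) :=
  Quotient.exact (s := isoSetoid R) h

theorem homPath_of_ne_zero {X Y : IndecModA R} {f : X.1.M →ₗ[R] Y.1.M} (hf : f ≠ 0) :
    HomPath (ARVertex.mk X) (ARVertex.mk Y) := by
  by_cases hbij : Function.Bijective f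
  · have hXY : ARVertex.mk X = ARVertex.mk Y :=
      Quotient.sound ⟨LinearEquiv.ofBijective f hbij⟩
    rw [hXY]
  · exact .single ⟨X, Y, f, hf, hbij, rfl, rfl⟩

theorem IsIrred.ne_zero {X Y : ModA R} {f : X.M →ₗ[R] Y.M} (hf : IsIrred f) : f ≠ 0 := by
  rintro rfl
  rcases hf.2.2 (.of R PUnit) 0 0 rfl with ⟨r, hr⟩ | ⟨s, hs⟩
  · exact hf.1 ⟨0, by rw [← hr, LinearMap.comp_zero, LinearMap.comp_zero]⟩
  · exact hf.2.1 ⟨0, by rw [← hs, LinearMap.zero_comp, LinearMap.zero_comp]⟩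

theorem IsIrred.not_bijective {X Y : ModA R} {f : X.M →ₗ[R] Y.M} (hf : IsIrred f) :
    ¬Function.Bijective f :=
  fun h => hf.1 (.of_comp_bijective (Z := Y) (g := LinearMap.id) h)

theorem ARArrow.homStep {x y : ARVertex R} (h : ARArrow x y) : HomStep x y :=
  let ⟨X, Y, f, hf, hX, hY⟩ := h
  ⟨X, Y, f, hf.ne_zero, hf.not_bijective, hX, hY⟩

end HomPath

/-! ### Arrows between cyclic vertices can be reversed -/

section Reversal

variable {R : Type u} [Ring R] {X Y : IndecModA R}

theorem IsIrred.exists_inRad_reflecting_extensions {f : X.1.M →ₗ[R] Y.1.M} (hf : IsIrred f)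
    (hfs : ¬Function.Surjective f) (hYX : ¬HomPath (ARVertex.mk Y) (ARVertex.mk X))
    {B : IndecModA R} {h : X.1.M →ₗ[R] B.1.M}
    (hh : ∀ a : X.1.M →ₗ[R] X.1.M, ExtendsAlong f (h ∘ₗ a) → ExtendsAlong f a)
    {c : ARVertex R} (hBc : ARArrow (ARVertex.mk B) c) (hcX : HomPath c (ARVertex.mk X)) :
    ∃ (C : IndecModA R) (h' : X.1.M →ₗ[R] C.1.M), ARVertex.mk C = c ∧ InRad h' ∧
      ∀ a : X.1.M →ₗ[R] X.1.M, ExtendsAlong f (h' ∘ₗ a) → ExtendsAlong f a := by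
  obtain ⟨B', C, g, hg, hB', rfl⟩ := hBc
  obtain ⟨e⟩ := nonempty_equiv_of_mk_eq hB'.symm
  have hYC (v : Y.1.M →ₗ[R] C.1.M) : v = 0 := by
    by_contra hv
    exact hYX ((homPath_of_ne_zero hv).trans hcX)
  refine ⟨C, g ∘ₗ e.toLinearMap ∘ₗ h, rfl, (hg.inRad B'.2).comp_right _, fun a ha => hh a ?_⟩
  exact (extendsAlong_equiv_comp e).mp (hf.extendsAlong_of_comp hfs hg hYC ha)

theorem IsIrred.homPath_of_not_surjective {f : X.1.M →ₗ[R] Y.1.M} (hf : IsIrred f)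
    (hfs : ¬Function.Surjective f) (hX : OnARCycle (ARVertex.mk X)) :
    HomPath (ARVertex.mk Y) (ARVertex.mk X) := by
  by_contra hYX
  have reflecting {c : ARVertex R} (hc : Relation.TransGen ARArrow (ARVertex.mk X) c) :
      HomPath c (ARVertex.mk X) →
      ∃ (C : IndecModA R) (h : X.1.M →ₗ[R] C.1.M), ARVertex.mk C = c ∧ InRad h ∧
        ∀ a : X.1.M →ₗ[R] X.1.M, ExtendsAlong f (h ∘ₗ a) → ExtendsAlong f a := by
    induction hc with
    | single hXc =>
      exact hf.exists_inRad_reflecting_extensions hfs hYX (h := LinearMap.id) (fun _ => id) hXc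
    | tail _ hbc ih =>
      intro hcX
      obtain ⟨B, h, rfl, -, hh⟩ := ih (hcX.head hbc.homStep)
      exact hf.exists_inRad_reflecting_extensions hfs hYX hh hbc hcX
  obtain ⟨C, h, hC, hrad, hh⟩ := reflecting hX .refl
  obtain ⟨e⟩ := nonempty_equiv_of_mk_eq hC
  have hnil : IsNilpotent (e.toLinearMap ∘ₗ h : Module.End R X.1.M) :=
    (IsIndecMod.bijective_or_isNilpotent X.2 _).resolve_left
      ((hrad.comp_left e.toLinearMap).not_bijective X.2)
  exact hf.1 (splitMonoMap_of_isNilpotent hnil fun a ha =>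
    hh a ((extendsAlong_equiv_comp e).mp ha))

theorem IsIrred.exists_inRad_reflecting_lifts {f : X.1.M →ₗ[R] Y.1.M} (hf : IsIrred f)
    (hfi : ¬Function.Injective f) (hYX : ¬HomPath (ARVertex.mk Y) (ARVertex.mk X))
    {B : IndecModA R} {h : B.1.M →ₗ[R] Y.1.M}
    (hh : ∀ b : Y.1.M →ₗ[R] Y.1.M, LiftsAlong f (b ∘ₗ h) → LiftsAlong f b)
    {c : ARVertex R} (hcB : ARArrow c (ARVertex.mk B)) (hYc : HomPath (ARVertex.mk Y) c) :
    ∃ (C : IndecModA R) (h' : C.1.M →ₗ[R] Y.1.M), ARVertex.mk C = c ∧ InRad h' ∧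
      ∀ b : Y.1.M →ₗ[R] Y.1.M, LiftsAlong f (b ∘ₗ h') → LiftsAlong f b := by
  obtain ⟨C, B', g, hg, rfl, hB'⟩ := hcB
  obtain ⟨e⟩ := nonempty_equiv_of_mk_eq hB'
  have hCX (v : C.1.M →ₗ[R] X.1.M) : v = 0 := by
    by_contra hv
    exact hYX (hYc.trans (homPath_of_ne_zero hv))
  refine ⟨C, (h ∘ₗ e.toLinearMap) ∘ₗ g, rfl, (hg.inRad C.2).comp_left _, fun b hb => hh b ?_⟩
  exact (liftsAlong_comp_equiv e).mp (hf.liftsAlong_of_comp hfi hg hCX hb)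

theorem IsIrred.homPath_of_not_injective {f : X.1.M →ₗ[R] Y.1.M} (hf : IsIrred f)
    (hfi : ¬Function.Injective f) (hY : OnARCycle (ARVertex.mk Y)) :
    HomPath (ARVertex.mk Y) (ARVertex.mk X) := by
  by_contra hYX
  have reflecting {c : ARVertex R} (hc : Relation.TransGen ARArrow c (ARVertex.mk Y)) :
      HomPath (ARVertex.mk Y) c →
      ∃ (C : IndecModA R) (h : C.1.M →ₗ[R] Y.1.M), ARVertex.mk C = c ∧ InRad h ∧
        ∀ b : Y.1.M →ₗ[R] Y.1.M, LiftsAlong f (b ∘ₗ h) → LiftsAlong f b := by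
    induction hc using Relation.TransGen.head_induction_on with
    | single hcY =>
      exact hf.exists_inRad_reflecting_lifts hfi hYX (h := LinearMap.id) (fun _ => id) hcY
    | head hcb _ ih =>
      intro hYc
      obtain ⟨B, h, rfl, -, hh⟩ := ih (hYc.tail hcb.homStep)
      exact hf.exists_inRad_reflecting_lifts hfi hYX hh hcb hYc
  obtain ⟨C, h, hC, hrad, hh⟩ := reflecting hY .refl
  obtain ⟨e⟩ := nonempty_equiv_of_mk_eq hC.symm
  have hnil : IsNilpotent (h ∘ₗ e.toLinearMap : Module.End R Y.1.M) :=
    (IsIndecMod.bijective_or_isNilpotent Y.2 _).resolve_left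
      ((hrad.comp_right e.toLinearMap).not_bijective Y.2)
  exact hf.2.1 (splitEpiMap_of_isNilpotent hnil fun b hb =>
    hh b ((liftsAlong_comp_equiv e).mp hb))

theorem ARArrow.homPath_symm {x y : ARVertex R} (h : ARArrow x y) (hx : OnARCycle x)
    (hy : OnARCycle y) : HomPath y x := by
  obtain ⟨X, Y, f, hf, rfl, rfl⟩ := h
  by_cases hfs : Function.Surjective f
  · exact hf.homPath_of_not_injective (fun hfi => hf.not_bijective ⟨hfi, hfs⟩) hy
  · exact hf.homPath_of_not_surjective hfs hx

theorem IsCyclicComponent.homPath {Γ : Set (ARVertex R)} (hΓ : IsCyclicComponent Γ)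
    {x y : ARVertex R} (hx : x ∈ Γ) (hy : y ∈ Γ) : HomPath x y := by
  have hwalk := hΓ.2.2.2 x hx y hy
  clear hy
  induction hwalk with
  | refl => exact .refl
  | tail _ hbc ih =>
    obtain ⟨hb, hc, hbc | hcb⟩ := hbc
    · exact ih.tail hbc.homStep
    · exact ih.trans (hcb.homPath_symm hc hb)

end Reversal

/-! ### Cycles through a cycle-finite module -/

section Cycle

theorem exists_relSeries_through {α : Type*} {r : SetRel α α} {a b c : α}
    (hab : Relation.ReflTransGen (fun x y => (x, y) ∈ r) a b)
    (hbc : Relation.ReflTransGen (fun x y => (x, y) ∈ r) b c) :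
    ∃ s : RelSeries r, s.head = a ∧ s.last = c ∧ b ∈ s := by
  induction hbc with
  | refl =>
    induction hab with
    | refl => exact ⟨.singleton r a, rfl, rfl, 0, rfl⟩
    | tail _ hcd ih =>
      obtain ⟨s, hhead, rfl, -⟩ := ih
      exact ⟨s.snoc _ hcd, (s.head_snoc _ hcd).trans hhead, s.last_snoc _ hcd,
        RelSeries.mem_snoc.mpr (.inr rfl)⟩
  | tail _ hcd ih =>
    obtain ⟨s, hhead, rfl, hb⟩ := ih
    exact ⟨s.snoc _ hcd, (s.head_snoc _ hcd).trans hhead, s.last_snoc _ hcd,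
      RelSeries.mem_snoc.mpr (.inl hb)⟩

variable {R : Type u} [Ring R]

theorem HomStep.exists_hom {X Y : IndecModA R} (h : HomStep (ARVertex.mk X) (ARVertex.mk Y)) :
    ∃ f : X.1.M →ₗ[R] Y.1.M, f ≠ 0 ∧ ¬Function.Bijective f := by
  obtain ⟨U, V, f, hf0, hf, hU, hV⟩ := h
  obtain ⟨e⟩ := nonempty_equiv_of_mk_eq hU.symm
  obtain ⟨e'⟩ := nonempty_equiv_of_mk_eq hV
  refine ⟨e'.toLinearMap ∘ₗ f ∘ₗ e.toLinearMap, fun h0 => hf0 ?_, fun hbij => hf ?_⟩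
  · refine LinearMap.ext fun u => e'.map_eq_zero_iff.mp ?_
    have hu : e' (f (e (e.symm u))) = 0 := LinearMap.congr_fun h0 (e.symm u)
    rwa [e.apply_symm_apply] at hu
  · exact (Function.Bijective.of_comp_iff f e.bijective).mp
      ((Function.Bijective.of_comp_iff' e'.bijective _).mp hbij)

theorem ARVertex.mk_out (x : ARVertex R) : ARVertex.mk (Quotient.out x) = x :=
  Quotient.out_eq x

theorem exists_hom_out {t : RelSeries {p : ARVertex R × ARVertex R | HomStep p.1 p.2}}
    (i : Fin t.length) :
    ∃ f : (Quotient.out (t i.castSucc)).1.M →ₗ[R] (Quotient.out (t i.succ)).1.M,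
      f ≠ 0 ∧ ¬Function.Bijective f :=
  HomStep.exists_hom <| by
    rw [ARVertex.mk_out, ARVertex.mk_out]
    exact t.step i

/-- The cycle of modules obtained from a closed path of isomorphism classes by choosing a
representative of each class. -/
noncomputable def homCycle (t : RelSeries {p : ARVertex R × ARVertex R | HomStep p.1 p.2})
    (hpos : 0 < t.length) (hclosed : t.last = t.head) : ModCycle R where
  len := t.length
  len_pos := hpos
  obj i := (Quotient.out (t i)).1
  obj_indec i := (Quotient.out (t i)).2
  closed := congrArg (fun x : ARVertex R => (Quotient.out x).1) hclosed
  hom i := (exists_hom_out i).choose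
  hom_ne_zero i := (exists_hom_out i).choose_spec.1
  hom_not_iso i := (exists_hom_out i).choose_spec.2

theorem IsCycleFiniteModule.reflTransGen_arArrow_of_homStep {X : IndecModA R}
    (hX : IsCycleFiniteModule X.1) {a b : ARVertex R} (hab : HomStep a b)
    (hbX : HomPath b (ARVertex.mk X)) (hXa : HomPath (ARVertex.mk X) a) :
    Relation.ReflTransGen ARArrow a b := by
  obtain ⟨s, rfl, rfl, hXs⟩ := exists_relSeries_through
    (r := {p : ARVertex R × ARVertex R | HomStep p.1 p.2}) hbX hXa
  let t := s.snoc s.head hab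
  have hclosed : t.last = t.head := (s.last_snoc _ hab).trans (s.head_snoc _ hab).symm
  have hpasses : (homCycle t (Nat.succ_pos _) hclosed).Passes X.1 := by
    obtain ⟨i, hi⟩ := RelSeries.mem_snoc.mpr (.inl hXs : _ ∨ ARVertex.mk X = s.head)
    exact ⟨i, nonempty_equiv_of_mk_eq ((ARVertex.mk_out _).trans hi)⟩
  have hsource : ARVertex.mk (Quotient.out (t (Fin.last s.length).castSucc)) = s.last :=
    (ARVertex.mk_out _).trans (s.snoc_castSucc _ hab _)
  have htarget : ARVertex.mk (Quotient.out (t (Fin.last s.length).succ)) = s.head :=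
    (ARVertex.mk_out _).trans (s.last_snoc' _ hab)
  rw [← hsource, ← htarget]
  exact reflTransGen_arArrow_of_not_inRadInf (hX.2 _ hpasses (Fin.last s.length))

theorem IsCycleFiniteModule.reflTransGen_arArrow_of_homPath {X : IndecModA R}
    (hX : IsCycleFiniteModule X.1) {a b : ARVertex R} (hab : HomPath a b)
    (hbX : HomPath b (ARVertex.mk X)) (hXa : HomPath (ARVertex.mk X) a) :
    Relation.ReflTransGen ARArrow a b := by
  induction hab with
  | refl => exact .refl
  | tail hab hbc ih =>
    exact (ih (hbX.head hbc)).trans (hX.reflTransGen_arArrow_of_homStep hbc hbX (hXa.trans hab))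

theorem IsCyclicComponent.mem_of_reflTransGen {Γ : Set (ARVertex R)} (hΓ : IsCyclicComponent Γ)
    {x y : ARVertex R} (hx : x ∈ Γ) (hxy : Relation.ReflTransGen ARArrow x y)
    (hyx : Relation.ReflTransGen ARArrow y x) : y ∈ Γ := by
  induction hxy with
  | refl => exact hx
  | tail hxb hbc ih =>
    have hc : OnARCycle _ := .tail' (hyx.trans hxb) hbc
    exact hΓ.2.2.1 _ (ih (hyx.head hbc)) _ hc (.inl hbc)

theorem IsCycleFiniteCyclicComponent.mem_of_homPath {Γ : Set (ARVertex R)}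
    (hΓ : IsCycleFiniteCyclicComponent Γ) {x y z : ARVertex R} (hx : x ∈ Γ) (hxy : HomPath x y)
    (hyz : HomPath y z) (hz : z ∈ Γ) : y ∈ Γ := by
  obtain ⟨hΓ, _, hv, X, rfl, hX⟩ := hΓ
  have hXy : HomPath (ARVertex.mk X) y := (hΓ.homPath hv hx).trans hxy
  have hyX : HomPath y (ARVertex.mk X) := hyz.trans (hΓ.homPath hz hv)
  exact hΓ.mem_of_reflTransGen hv (hX.reflTransGen_arArrow_of_homPath hXy hyX .refl)
    (hX.reflTransGen_arArrow_of_homPath hyX .refl hXy)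

end Cycle

/-! ### Primitive idempotents -/

section PrimitiveIdempotent

variable {R : Type u} [Ring R] {e : R}

theorem IsPrimitiveIdempotent.op {A : Type u} [Ring A] {e : A} (he : IsPrimitiveIdempotent A e) :
    IsPrimitiveIdempotent Aᵐᵒᵖ (MulOpposite.op e) := by
  refine ⟨congrArg MulOpposite.op he.1, (MulOpposite.op_ne_zero_iff e).mpr he.2.1,
    fun f g hf hg hfg hgf hefg => ?_⟩
  exact (he.2.2 f.unop g.unop (congrArg MulOpposite.unop hf) (congrArg MulOpposite.unop hg)
    (congrArg MulOpposite.unop hgf) (congrArg MulOpposite.unop hfg)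
    (congrArg MulOpposite.unop hefg)).imp (MulOpposite.unop_eq_zero_iff f).mp
      (MulOpposite.unop_eq_zero_iff g).mp

theorem mul_eq_self_of_mem_span_singleton (he : IsIdempotentElem e) {x : R}
    (hx : x ∈ Ideal.span {e}) : x * e = x := by
  obtain ⟨r, rfl⟩ := Ideal.mem_span_singleton'.mp hx
  rw [mul_assoc, he.eq]

theorem mul_eq_zero_of_mem_span_singleton_one_sub (he : IsIdempotentElem e) {x : R}
    (hx : x ∈ Ideal.span {1 - e}) : x * e = 0 := by
  rw [← mul_eq_self_of_mem_span_singleton he.one_sub hx, mul_assoc, he.one_sub_mul_self, mul_zero]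

theorem mul_eq_self_and_mul_eq_zero_of_disjoint (he : IsIdempotentElem e)
    {P Q : Submodule R (Ideal.span {e})} (hPQ : Disjoint P Q) {p q : Ideal.span {e}}
    (hp : p ∈ P) (hq : q ∈ Q) (hpq : (p : R) + q = e) :
    (p : R) * p = p ∧ (p : R) * q = 0 := by
  have hsum : (p : R) * p + p * q = p := by
    rw [← mul_add, hpq, mul_eq_self_of_mem_span_singleton he p.2]
  have hzero : (p : R) • q = 0 := by
    refine Submodule.disjoint_def.mp hPQ _ ?_ (Q.smul_mem _ hq)
    have hsub : (p : R) • q = p - (p : R) • p := Subtype.ext (eq_sub_of_add_eq' hsum)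
    exact hsub ▸ P.sub_mem hp (P.smul_mem _ hp)
  have hmul : (p : R) * q = 0 := congrArg Subtype.val hzero
  exact ⟨by rwa [hmul, add_zero] at hsum, hmul⟩

theorem eq_top_of_mem_span_singleton {P : Submodule R (Ideal.span {e})} {p : Ideal.span {e}}
    (hp : p ∈ P) (hpe : (p : R) = e) : P = ⊤ := by
  refine eq_top_iff.mpr fun x _ => ?_
  obtain ⟨r, hr⟩ := Ideal.mem_span_singleton'.mp x.2
  have hx : r • p = x := Subtype.ext ((congrArg (r * ·) hpe).trans hr)
  exact hx ▸ P.smul_mem r hp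

theorem IsPrimitiveIdempotent.isIndecMod_span (he : IsPrimitiveIdempotent R e) :
    IsIndecMod R (Ideal.span {e}) := by
  have heSpan : e ∈ Ideal.span {e} := Ideal.mem_span_singleton_self e
  refine isIndecMod_iff_isCompl.mpr
    ⟨⟨⟨e, heSpan⟩, 0, fun h => he.2.1 (congrArg Subtype.val h)⟩, fun P Q hPQ => ?_⟩
  obtain ⟨p, q, hp, hq, hpq'⟩ :=
    Submodule.codisjoint_iff_exists_add_eq.mp hPQ.codisjoint ⟨e, heSpan⟩
  have hpq : (p : R) + q = e := congrArg Subtype.val hpq'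
  have hp' := mul_eq_self_and_mul_eq_zero_of_disjoint he.1 hPQ.disjoint hp hq hpq
  have hq' := mul_eq_self_and_mul_eq_zero_of_disjoint he.1 hPQ.symm.disjoint hq hp
    ((add_comm _ _).trans hpq)
  refine (he.2.2 p q hp'.1 hq'.1 hp'.2 hq'.2 hpq.symm).imp (fun h0 => ?_) fun h0 => ?_
  · refine eq_bot_of_isCompl_top (eq_top_of_mem_span_singleton hq ?_ ▸ hPQ)
    rwa [h0, zero_add] at hpq
  · refine eq_bot_of_top_isCompl (eq_top_of_mem_span_singleton hp ?_ ▸ hPQ)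
    rwa [h0, add_zero] at hpq

variable [IsArtinianRing R]

/-- Fitting's lemma for right multiplication by `a * e` on `R e`. -/
theorem IsPrimitiveIdempotent.isNilpotent_or_exists_mul_eq (he : IsPrimitiveIdempotent R e)
    (a : R) : IsNilpotent (a * e) ∨ ∃ r, r * (a * e) = e := by
  have haeSpan : a * e ∈ Ideal.span {e} := Ideal.mem_span_singleton'.mpr ⟨a, rfl⟩
  let ρ : Module.End R (Ideal.span {e}) :=
    LinearMap.toSpanSingleton R _ ⟨a * e, haeSpan⟩ ∘ₗ (Ideal.span {e}).subtype
  have hρ (n : ℕ) (x : Ideal.span {e}) : ((ρ ^ n) x : R) = x * (a * e) ^ n := by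
    induction n generalizing x with
    | zero => rw [pow_zero, pow_zero, mul_one, Module.End.one_apply]
    | succ n ih =>
      rw [pow_succ, Module.End.mul_apply, ih, pow_succ', ← mul_assoc]
      rfl
  let e' : Ideal.span {e} := ⟨e, Ideal.mem_span_singleton_self e⟩
  rcases he.isIndecMod_span.bijective_or_isNilpotent ρ with hbij | ⟨n, hn⟩
  · obtain ⟨r, hr⟩ := hbij.surjective e'
    exact .inr ⟨r, congrArg Subtype.val hr⟩
  · have hzero : e * (a * e) ^ n = 0 := by
      rw [← hρ n e', hn]
      rfl
    exact .inl ⟨n + 1, by rw [pow_succ', mul_assoc, hzero, mul_zero]⟩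

theorem IsPrimitiveIdempotent.exists_mul_eq_of_smul_eq_self (he : IsPrimitiveIdempotent R e)
    {M : Type*} [AddCommGroup M] [Module R M] {y : M} (hy : y ≠ 0) (hey : e • y = y) {a : R}
    (hay : a • y = y) : ∃ r, r * (a * e) = e := by
  refine (he.isNilpotent_or_exists_mul_eq a).resolve_left fun ⟨n, hn⟩ => hy ?_
  have hpow (n : ℕ) : (a * e) ^ n • y = y := by
    induction n with
    | zero => rw [pow_zero, one_smul]
    | succ n ih => rw [pow_succ, mul_smul, mul_smul, hey, hay, ih]
  rw [← hpow n, hn, zero_smul]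

end PrimitiveIdempotent

/-! ### Local modules at a primitive idempotent -/

section LocalModule

variable {R : Type u} [Ring R] {e : R} {I J : Ideal R}

theorem mul_mem_of_one_sub_mem (hI : 1 - e ∈ I) {a : R} (ha : a ∈ I) : a * e ∈ I := by
  have hae : a * e = a - a * (1 - e) := by rw [mul_sub, mul_one, sub_sub_cancel]
  exact hae ▸ I.sub_mem ha (I.mul_mem_left a hI)

theorem notMem_of_one_sub_mem (hI : 1 - e ∈ I) (hne : I ≠ ⊤) : e ∉ I := fun he =>
  hne (I.eq_top_iff_one.mpr (sub_add_cancel 1 e ▸ I.add_mem hI he))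

theorem smul_mk_one_of_one_sub_mem (hI : 1 - e ∈ I) :
    e • (Submodule.Quotient.mk 1 : R ⧸ I) = Submodule.Quotient.mk 1 := by
  rw [← Submodule.Quotient.mk_smul, smul_eq_mul, mul_one]
  exact ((Submodule.Quotient.eq I).mpr hI).symm

theorem mk_one_ne_zero (hne : I ≠ ⊤) : (Submodule.Quotient.mk 1 : R ⧸ I) ≠ 0 := fun h =>
  hne (I.eq_top_iff_one.mpr ((Submodule.Quotient.mk_eq_zero I).mp h))

theorem span_one_sub_ne_top (he : IsIdempotentElem e) (he0 : e ≠ 0) :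
    Ideal.span {1 - e} ≠ ⊤ := fun htop => by
  have h1 := mul_eq_zero_of_mem_span_singleton_one_sub he
    (htop ▸ Submodule.mem_top : (1 : R) ∈ Ideal.span {1 - e})
  exact he0 ((one_mul e).symm.trans h1)

theorem IsPrimitiveIdempotent.sup_ne_top [IsArtinianRing R] (he : IsPrimitiveIdempotent R e)
    (hI : 1 - e ∈ I) (hI' : I ≠ ⊤) (hJ : 1 - e ∈ J) (hJ' : J ≠ ⊤) : I ⊔ J ≠ ⊤ := fun htop => by
  obtain ⟨i, hi, j, hj, hij⟩ := Submodule.mem_sup.mp ((I ⊔ J).eq_top_iff_one.mp htop)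
  have hi1 : i • (Submodule.Quotient.mk 1 : R ⧸ J) = Submodule.Quotient.mk 1 := by
    rw [← Submodule.Quotient.mk_smul, smul_eq_mul, mul_one, Submodule.Quotient.eq, ← hij,
      sub_add_cancel_left]
    exact J.neg_mem hj
  obtain ⟨r, hr⟩ := he.exists_mul_eq_of_smul_eq_self (mk_one_ne_zero hJ')
    (smul_mk_one_of_one_sub_mem hJ) hi1
  exact notMem_of_one_sub_mem hI hI' (hr ▸ I.mul_mem_left r (mul_mem_of_one_sub_mem hI hi))

/-- The largest proper left ideal containing `1 - e`, for `e` a primitive idempotent: the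
quotient by it is the simple top of `R e`. -/
def topIdeal (e : R) : Ideal R := sSup {I | 1 - e ∈ I ∧ I ≠ ⊤}

theorem le_topIdeal (hI : 1 - e ∈ I) (hne : I ≠ ⊤) : I ≤ topIdeal e :=
  le_sSup ⟨hI, hne⟩

theorem one_sub_mem_topIdeal (he : IsIdempotentElem e) (he0 : e ≠ 0) : 1 - e ∈ topIdeal e :=
  have hmem := Ideal.mem_span_singleton_self (1 - e)
  le_topIdeal hmem (span_one_sub_ne_top he he0) hmem

variable [IsArtinianRing R]

theorem IsPrimitiveIdempotent.topIdeal_ne_top (he : IsPrimitiveIdempotent R e) :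
    topIdeal e ≠ ⊤ := fun htop => by
  have hdir : DirectedOn (· ≤ ·) {I : Ideal R | 1 - e ∈ I ∧ I ≠ ⊤} := fun I hI J hJ =>
    ⟨I ⊔ J, ⟨Ideal.mem_sup_left hI.1, he.sup_ne_top hI.1 hI.2 hJ.1 hJ.2⟩, le_sup_left,
      le_sup_right⟩
  have hne : {I : Ideal R | 1 - e ∈ I ∧ I ≠ ⊤}.Nonempty :=
    ⟨_, Ideal.mem_span_singleton_self _, span_one_sub_ne_top he.1 he.2.1⟩
  obtain ⟨I, hI, h1⟩ := (Submodule.mem_sSup_of_directed hne hdir).mp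
    ((topIdeal e).eq_top_iff_one.mp htop)
  exact hI.2 ((Ideal.eq_top_iff_one I).mpr h1)

theorem IsPrimitiveIdempotent.isIndecMod_quotient (he : IsPrimitiveIdempotent R e)
    (hI : 1 - e ∈ I) (hne : I ≠ ⊤) : IsIndecMod R (R ⧸ I) := by
  refine isIndecMod_iff_isCompl.mpr
    ⟨Submodule.Quotient.nontrivial_iff.mpr hne, fun P Q hPQ => ?_⟩
  have one_sub_mem_comap (N : Submodule R (R ⧸ I)) : 1 - e ∈ N.comap I.mkQ :=
    I.le_comap_mkQ N hI
  have eq_top_of_comap {N : Submodule R (R ⧸ I)} (h : N.comap I.mkQ = ⊤) : N = ⊤ :=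
    Submodule.comap_injective_of_surjective I.mkQ_surjective (h.trans (Submodule.comap_top _).symm)
  by_contra! hcon
  refine he.sup_ne_top (one_sub_mem_comap P) (fun h => hcon.2 ?_) (one_sub_mem_comap Q)
    (fun h => hcon.1 ?_) ?_
  · exact eq_bot_of_top_isCompl (eq_top_of_comap h ▸ hPQ)
  · exact eq_bot_of_isCompl_top (eq_top_of_comap h ▸ hPQ)
  · obtain ⟨p, q, hp, hq, hpq⟩ :=
      Submodule.codisjoint_iff_exists_add_eq.mp hPQ.codisjoint (I.mkQ 1)
    obtain ⟨a, rfl⟩ := I.mkQ_surjective p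
    have hq' : I.mkQ (1 - a) = q := by rw [map_sub, ← hpq, add_sub_cancel_left]
    exact (Ideal.eq_top_iff_one _).mpr
      (Submodule.mem_sup.mpr ⟨a, hp, 1 - a, Submodule.mem_comap.mpr (hq' ▸ hq), add_sub_cancel a 1⟩)

/-- The indecomposable module `R / I`, a nonzero quotient of `R e`. -/
abbrev quotientIndec (he : IsPrimitiveIdempotent R e) (hI : 1 - e ∈ I) (hne : I ≠ ⊤) :
    IndecModA R :=
  ⟨.of R (R ⧸ I), he.isIndecMod_quotient hI hne⟩

/-- The simple top of `R e`. -/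
abbrev topModule (he : IsPrimitiveIdempotent R e) : IndecModA R :=
  quotientIndec he (one_sub_mem_topIdeal he.1 he.2.1) he.topIdeal_ne_top

end LocalModule

/-! ### Paths between modules and simple tops -/

section TopPath

variable {R : Type u} [Ring R] [IsArtinianRing R] {e f b : R}

theorem homPath_quotientIndec (he : IsPrimitiveIdempotent R e) {I : Ideal R} (hI : 1 - e ∈ I)
    (hne : I ≠ ⊤) {X : IndecModA R} {x : X.1.M} (hx : x ≠ 0) (hIx : ∀ a ∈ I, a • x = 0) :
    HomPath (ARVertex.mk (quotientIndec he hI hne)) (ARVertex.mk X) := by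
  refine homPath_of_ne_zero (X := quotientIndec he hI hne)
    (f := I.liftQ (LinearMap.toSpanSingleton R X.1.M x) hIx) fun h => hx ?_
  exact (one_smul R x).symm.trans (LinearMap.congr_fun h (Submodule.Quotient.mk 1))

theorem IsPrimitiveIdempotent.notMem_map_topIdeal_sup (hf : IsPrimitiveIdempotent R f)
    (he : IsIdempotentElem e) (hb : b ≠ 0) (hfb : f * b = b) (hbe : b * e = b) :
    b ∉ Submodule.map (LinearMap.toSpanSingleton R R b) (topIdeal f) ⊔ Ideal.span {1 - e} := by
  intro hmem
  obtain ⟨_, ⟨m, hm, rfl⟩, t, ht, hmt⟩ := Submodule.mem_sup.mp hmem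
  have hte : t * e = 0 := mul_eq_zero_of_mem_span_singleton_one_sub he ht
  have hmb : m • b = b := by
    have h := congrArg (· * e) hmt
    simpa only [LinearMap.toSpanSingleton_apply, smul_eq_mul, add_mul, mul_assoc, hte, hbe,
      add_zero] using h
  obtain ⟨r, hr⟩ := hf.exists_mul_eq_of_smul_eq_self hb hfb hmb
  have hfI := one_sub_mem_topIdeal hf.1 hf.2.1
  have hfm : r * (m * f) ∈ topIdeal f :=
    Ideal.mul_mem_left _ r (mul_mem_of_one_sub_mem hfI hm)
  rw [hr] at hfm
  exact notMem_of_one_sub_mem hfI hf.topIdeal_ne_top hfm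

/-- The path runs through `R / I`, where `I` is generated by `1 - e` and `rad (R f) * b`. -/
theorem homPath_topModule_of_smul_eq_zero (he : IsPrimitiveIdempotent R e)
    (hf : IsPrimitiveIdempotent R f) (hb : b ≠ 0) (hfb : f * b = b) (hbe : b * e = b)
    {X : IndecModA R} {x : X.1.M} (hx : x ≠ 0) (hex : e • x = x) (hbx : b • x = 0) :
    HomPath (ARVertex.mk (topModule hf)) (ARVertex.mk X) := by
  let I : Ideal R :=
    Submodule.map (LinearMap.toSpanSingleton R R b) (topIdeal f) ⊔ Ideal.span {1 - e}
  have hI : 1 - e ∈ I := Ideal.mem_sup_right (Ideal.mem_span_singleton_self _)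
  have hIx : I ≤ LinearMap.ker (LinearMap.toSpanSingleton R X.1.M x) := by
    refine sup_le ?_ ((Ideal.span_singleton_le_iff_mem _).mpr ?_)
    · rintro _ ⟨m, -, rfl⟩
      exact (mul_smul m b x).trans (by rw [hbx, smul_zero])
    · exact (sub_smul 1 e x).trans (by rw [one_smul, hex, sub_self])
  have hne : I ≠ ⊤ := fun htop =>
    hx ((one_smul R x).symm.trans (hIx (htop ▸ Submodule.mem_top)))
  have hbI : I.mkQ b ≠ 0 := fun h =>
    hf.notMem_map_topIdeal_sup he.1 hb hfb hbe ((Submodule.Quotient.mk_eq_zero I).mp h)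
  refine (homPath_quotientIndec _ _ _ (X := quotientIndec he hI hne) hbI fun m hm => ?_).trans
    (homPath_quotientIndec he hI hne hx fun _ ha => hIx ha)
  exact (Submodule.Quotient.mk_eq_zero I).mpr (Ideal.mem_sup_left ⟨m, hm, rfl⟩)

theorem homPath_topModule_topModule (he : IsPrimitiveIdempotent R e)
    (hf : IsPrimitiveIdempotent R f) (hb : b ≠ 0) (hfb : f * b = b) (hbe : b * e = b)
    (hbI : b ∈ topIdeal e) :
    HomPath (ARVertex.mk (topModule hf)) (ARVertex.mk (topModule he)) := by
  refine homPath_topModule_of_smul_eq_zero he hf hb hfb hbe (mk_one_ne_zero he.topIdeal_ne_top)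
    (smul_mk_one_of_one_sub_mem (one_sub_mem_topIdeal he.1 he.2.1)) ?_
  exact (Submodule.Quotient.mk_eq_zero _).mpr (show b * 1 ∈ topIdeal e by rwa [mul_one])

theorem exists_le_notMem_isIndecMod_quotient {R M : Type u} [Ring R] [AddCommGroup M] [Module R M]
    [IsNoetherian R M] {L₀ : Submodule R M} {v : M} (hv : v ∉ L₀) :
    ∃ L ≥ L₀, v ∉ L ∧ IsIndecMod R (M ⧸ L) := by
  obtain ⟨L, ⟨hL₀, hvL⟩, hmax⟩ := exists_maximal_of_wellFoundedGT
    (fun L : Submodule R M => L₀ ≤ L ∧ v ∉ L) ⟨L₀, le_rfl, hv⟩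
  have hv0 : L.mkQ v ≠ 0 := fun h => hvL ((Submodule.Quotient.mk_eq_zero L).mp h)
  have mkQ_mem {P : Submodule R (M ⧸ L)} (hP : P ≠ ⊥) : L.mkQ v ∈ P := by
    by_contra hvP
    refine hP (Submodule.comap_injective_of_surjective L.mkQ_surjective ?_)
    rw [Submodule.comap_bot, Submodule.ker_mkQ]
    exact (hmax ⟨hL₀.trans (L.le_comap_mkQ P), hvP⟩ (L.le_comap_mkQ P)).antisymm
      (L.le_comap_mkQ P)
  refine ⟨L, hL₀, hvL, isIndecMod_iff_isCompl.mpr ⟨⟨_, _, hv0⟩, fun P Q hPQ => ?_⟩⟩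
  by_contra! hcon
  exact hv0 (Submodule.disjoint_def.mp hPQ.disjoint _ (mkQ_mem hcon.1) (mkQ_mem hcon.2))

theorem IsPrimitiveIdempotent.notMem_span_pair (hf : IsPrimitiveIdempotent R f)
    (he : IsIdempotentElem e) (hb : b ≠ 0) (hfb : f * b = b) (hbe : b * e = b)
    {M : Type*} [AddCommGroup M] [Module R M] {y : M} (hy : y ≠ 0) (hfy : f • y = y) :
    (y, (0 : R)) ∉ Submodule.span R {((0 : M), 1 - e), (y, -b)} := by
  intro hmem
  obtain ⟨r, a, hra⟩ := Submodule.mem_span_pair.mp hmem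
  have hay : a • y = y := by
    have h := congrArg Prod.fst hra
    rwa [Prod.fst_add, Prod.smul_fst, Prod.smul_fst, smul_zero, zero_add] at h
  have hab : a * b = 0 := by
    have h : (r * (1 - e) + a * -b) * e = 0 * e := congrArg (Prod.snd · * e) hra
    rwa [add_mul, mul_assoc, he.one_sub_mul_self, mul_zero, zero_add, mul_assoc, neg_mul, hbe,
      mul_neg, zero_mul, neg_eq_zero] at h
  obtain ⟨s, hs⟩ := hf.exists_mul_eq_of_smul_eq_self hy hfy hay
  refine hb ?_
  calc b = s * (a * f) * b := by rw [hs, hfb]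
    _ = s * (a * (f * b)) := by rw [mul_assoc, mul_assoc]
    _ = 0 := by rw [hfb, hab, mul_zero]

/-- The path runs through an indecomposable quotient of `(Y × R) / ⟨(0, 1 - e), (y, -b)⟩`, the
module obtained by gluing `R e` to `Y` along `b ↦ y`. -/
theorem homPath_topModule_of_forall_smul_eq_zero (he : IsPrimitiveIdempotent R e)
    (hf : IsPrimitiveIdempotent R f) (hb : b ≠ 0) (hfb : f * b = b) (hbe : b * e = b)
    {Y : IndecModA R} {y : Y.1.M} (hy : y ≠ 0) (hfy : f • y = y)
    (heY : ∀ m : Y.1.M, e • m = 0) :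
    HomPath (ARVertex.mk Y) (ARVertex.mk (topModule he)) := by
  obtain ⟨L, hL, hyL, hindec⟩ := exists_le_notMem_isIndecMod_quotient
    (hf.notMem_span_pair he.1 hb hfb hbe hy hfy)
  have heL : ((0 : Y.1.M), 1 - e) ∈ L := hL (Submodule.subset_span (.inl rfl))
  have hbL : (y, -b) ∈ L := hL (Submodule.subset_span (.inr rfl))
  let G : IndecModA R := ⟨.of R ((Y.1.M × R) ⧸ L), hindec⟩
  have hYG : L.mkQ ∘ₗ LinearMap.inl R Y.1.M R ≠ 0 := fun h =>
    hyL ((Submodule.Quotient.mk_eq_zero L).mp (LinearMap.congr_fun h y))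
  have hsnd : L.map (LinearMap.snd R Y.1.M R) ≤ topIdeal e := by
    refine le_topIdeal ⟨_, heL, rfl⟩ fun htop => ?_
    obtain ⟨⟨m, r⟩, hm, hr⟩ := (Ideal.eq_top_iff_one _).mp htop
    obtain rfl : r = 1 := hr
    have hbm : b • m = 0 := by rw [← hbe, mul_smul, heY, smul_zero]
    have hy0 := L.add_mem hbL (L.smul_mem b hm)
    rw [Prod.smul_mk, Prod.mk_add_mk, hbm, add_zero, smul_eq_mul, mul_one, neg_add_cancel] at hy0
    exact hyL hy0
  let π : (Y.1.M × R) ⧸ L →ₗ[R] R ⧸ topIdeal e :=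
    L.mapQ (topIdeal e) (LinearMap.snd R Y.1.M R) (Submodule.map_le_iff_le_comap.mp hsnd)
  have hπ : π ≠ 0 := fun h => mk_one_ne_zero he.topIdeal_ne_top
    (LinearMap.congr_fun h (L.mkQ (0, 1)))
  exact (homPath_of_ne_zero (Y := G) hYG).trans (homPath_of_ne_zero (X := G) (Y := topModule he) hπ)

end TopPath

/-! ### Arrows of the quiver -/

section QuiverArrow

variable {A : Type u} [Ring A] {e : A}

instance jacobsonRad.isTwoSided : (jacobsonRad A).IsTwoSided :=
  inferInstanceAs (Ideal.jacobson ⊥).IsTwoSided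

theorem eq_zero_of_isIdempotentElem_of_mem_jacobsonRad (he : IsIdempotentElem e)
    (hmem : e ∈ jacobsonRad A) : e = 0 := by
  obtain ⟨z, hz⟩ := Ideal.mem_jacobson_iff.mp hmem (-1)
  have hz1 : z * (1 - e) = 1 := by
    rw [Ideal.mem_bot, mul_neg_one, neg_mul] at hz
    rw [mul_sub, mul_one, ← sub_eq_zero, ← hz]
    abel
  calc e = z * (1 - e) * e := by rw [hz1, one_mul]
    _ = 0 := by rw [mul_assoc, he.one_sub_mul_self, mul_zero]

theorem mem_topIdeal_of_unop_mem_jacobsonRad (he : IsIdempotentElem e) (he0 : e ≠ 0) {b : Aᵐᵒᵖ}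
    (hb : b.unop ∈ jacobsonRad A) (hbe : b * .op e = b) : b ∈ topIdeal (.op e) := by
  have heop : IsIdempotentElem (MulOpposite.op e) := congrArg MulOpposite.op he
  have hI : 1 - .op e ∈ Ideal.span {b} ⊔ Ideal.span {1 - .op e} :=
    Ideal.mem_sup_right (Ideal.mem_span_singleton_self _)
  refine le_topIdeal hI (fun htop => he0 ?_) (Ideal.mem_sup_left (Ideal.mem_span_singleton_self b))
  obtain ⟨c, hc, t, ht, hct⟩ := Submodule.mem_sup.mp ((Ideal.eq_top_iff_one _).mp htop)
  obtain ⟨s, rfl⟩ := Ideal.mem_span_singleton'.mp hc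
  have hte : t * .op e = 0 := mul_eq_zero_of_mem_span_singleton_one_sub heop ht
  have hsb : s * b = .op e := by
    have h := congrArg (· * MulOpposite.op e) hct
    rwa [add_mul, mul_assoc, hbe, hte, add_zero, one_mul] at h
  have hbs : b.unop * s.unop = e := congrArg MulOpposite.unop hsb
  exact eq_zero_of_isIdempotentElem_of_mem_jacobsonRad he
    (hbs ▸ (jacobsonRad A).mul_mem_right s.unop hb)

theorem QAarrow.exists_mem_topIdeal {E : CompleteIdemFamily A} {i j : Fin E.n}
    (h : QAarrow A E i j) : ∃ b : Aᵐᵒᵖ, b ≠ 0 ∧ .op (E.e j) * b = b ∧ b * .op (E.e i) = b ∧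
      b ∈ topIdeal (.op (E.e i)) := by
  obtain ⟨y, hy, hmem⟩ := h
  have hi := (E.prim i).1
  have hj : E.e i * y * E.e j * E.e j = E.e i * y * E.e j := by rw [mul_assoc, (E.prim j).1]
  have hi' : E.e i * (E.e i * y * E.e j) = E.e i * y * E.e j := by
    rw [← mul_assoc, ← mul_assoc, hi]
  refine ⟨.op (E.e i * y * E.e j), fun h0 => hmem ?_, congrArg MulOpposite.op hj,
    congrArg MulOpposite.op hi', mem_topIdeal_of_unop_mem_jacobsonRad hi (E.prim i).2.1 ?_
      (congrArg MulOpposite.op hi')⟩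
  · rw [(MulOpposite.op_eq_zero_iff _).mp h0]
    exact zero_mem _
  · exact (jacobsonRad A).mul_mem_right _ ((jacobsonRad A).mul_mem_left _ hy)

end QuiverArrow

/-! ### Convexity of the support -/

section Support

variable {A : Type u} [Ring A] {E : CompleteIdemFamily A} {Γ : Set (ARVertex Aᵐᵒᵖ)}

/-- The set of vertices of `supp(Γ)`. Right `A`-modules are left `Aᵐᵒᵖ`-modules, so `X e_i ≠ 0`
says that `op e_i` acts nontrivially on `X`. -/
def supportVertices (E : CompleteIdemFamily A) (Γ : Set (ARVertex Aᵐᵒᵖ)) : Set (Fin E.n) :=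
  {i | ∃ x ∈ Γ, ∃ X : IndecModA Aᵐᵒᵖ, ARVertex.mk X = x ∧
    ∃ m : X.1.M, MulOpposite.op (E.e i) • m ≠ 0}

theorem exists_smul_eq_self_of_mem_supportVertices {i : Fin E.n} (hi : i ∈ supportVertices E Γ) :
    ∃ X : IndecModA Aᵐᵒᵖ, ARVertex.mk X ∈ Γ ∧
      ∃ x : X.1.M, x ≠ 0 ∧ MulOpposite.op (E.e i) • x = x := by
  obtain ⟨_, hX, X, rfl, m, hm⟩ := hi
  exact ⟨X, hX, _, hm, by rw [smul_smul, (E.prim i).op.1]⟩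

theorem smul_eq_zero_of_notMem_supportVertices {i : Fin E.n} (hi : i ∉ supportVertices E Γ)
    {X : IndecModA Aᵐᵒᵖ} (hX : ARVertex.mk X ∈ Γ) (m : X.1.M) : MulOpposite.op (E.e i) • m = 0 := by
  by_contra hm
  exact hi ⟨_, hX, X, rfl, m, hm⟩

variable [IsArtinianRing Aᵐᵒᵖ]

theorem mem_supportVertices_of_topModule_mem {i : Fin E.n}
    (hi : ARVertex.mk (topModule (E.prim i).op) ∈ Γ) : i ∈ supportVertices E Γ := by
  by_contra hi'
  have hmk := smul_mk_one_of_one_sub_mem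
    (one_sub_mem_topIdeal (E.prim i).op.1 (E.prim i).op.2.1)
  exact mk_one_ne_zero (E.prim i).op.topIdeal_ne_top
    (hmk.symm.trans (smul_eq_zero_of_notMem_supportVertices hi' hi _))

theorem QAarrow.homPath_topModule_of_notMem_target (hΓ : IsCyclicComponent Γ) {i j : Fin E.n}
    (hij : QAarrow A E i j) (hj : j ∉ supportVertices E Γ) {z : ARVertex Aᵐᵒᵖ} (hz : z ∈ Γ)
    (hi : i ∉ supportVertices E Γ → HomPath (.mk (topModule (E.prim i).op)) z) :
    HomPath (.mk (topModule (E.prim j).op)) z := by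
  obtain ⟨b, hb, hjb, hbi, hbtop⟩ := hij.exists_mem_topIdeal
  by_cases hi' : i ∈ supportVertices E Γ
  · obtain ⟨X, hX, x, hx, hix⟩ := exists_smul_eq_self_of_mem_supportVertices hi'
    have hbx : b • x = 0 := by
      rw [← hjb, mul_smul, smul_eq_zero_of_notMem_supportVertices hj hX]
    exact (homPath_topModule_of_smul_eq_zero (E.prim i).op (E.prim j).op hb hjb hbi hx hix
      hbx).trans (hΓ.homPath hX hz)
  · exact (homPath_topModule_topModule (E.prim i).op (E.prim j).op hb hjb hbi hbtop).trans (hi hi')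

theorem QAarrow.homPath_topModule_of_notMem_source (hΓ : IsCyclicComponent Γ) {i j : Fin E.n}
    (hij : QAarrow A E i j) (hi : i ∉ supportVertices E Γ) {z : ARVertex Aᵐᵒᵖ} (hz : z ∈ Γ)
    (hj : j ∉ supportVertices E Γ → HomPath z (.mk (topModule (E.prim j).op))) :
    HomPath z (.mk (topModule (E.prim i).op)) := by
  obtain ⟨b, hb, hjb, hbi, hbtop⟩ := hij.exists_mem_topIdeal
  by_cases hj' : j ∈ supportVertices E Γ
  · obtain ⟨Y, hY, y, hy, hjy⟩ := exists_smul_eq_self_of_mem_supportVertices hj'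
    exact (hΓ.homPath hz hY).trans (homPath_topModule_of_forall_smul_eq_zero (E.prim i).op
      (E.prim j).op hb hjb hbi hy hjy (smul_eq_zero_of_notMem_supportVertices hi hY))
  · exact (hj hj').trans
      (homPath_topModule_topModule (E.prim i).op (E.prim j).op hb hjb hbi hbtop)

theorem homPath_topModule_of_start_mem_supportVertices (hΓ : IsCyclicComponent Γ)
    {z : ARVertex Aᵐᵒᵖ} (hz : z ∈ Γ) {n : ℕ} {c : ℕ → Fin E.n}
    (hc : ∀ k < n, QAarrow A E (c k) (c (k + 1))) (h0 : c 0 ∈ supportVertices E Γ) {k : ℕ}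
    (hkn : k ≤ n) (hk : c k ∉ supportVertices E Γ) :
    HomPath (.mk (topModule (E.prim (c k)).op)) z := by
  induction k with
  | zero => exact absurd h0 hk
  | succ k ih => exact (hc k hkn).homPath_topModule_of_notMem_target hΓ hk hz (ih (by omega))

theorem homPath_topModule_of_end_mem_supportVertices (hΓ : IsCyclicComponent Γ)
    {z : ARVertex Aᵐᵒᵖ} (hz : z ∈ Γ) {n : ℕ} {c : ℕ → Fin E.n}
    (hc : ∀ k < n, QAarrow A E (c k) (c (k + 1))) (hn : c n ∈ supportVertices E Γ) {k : ℕ}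
    (hkn : k ≤ n) (hk : c k ∉ supportVertices E Γ) :
    HomPath z (.mk (topModule (E.prim (c k)).op)) := by
  induction hkn using Nat.decreasingInduction with
  | self => exact absurd hn hk
  | of_succ k hkn ih => exact (hc k hkn).homPath_topModule_of_notMem_source hΓ hk hz ih

end Support

theorem support_of_cycle_finite_component_convex_general
    (A : Type u) [Ring A] [IsArtinianRing Aᵐᵒᵖ] (Γ : Set (ARVertex Aᵐᵒᵖ))
    (hΓ : IsCycleFiniteCyclicComponent Γ) (E : CompleteIdemFamily A) :
    ConvexVertexSet A E (supportVertices E Γ) := by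
  intro n c hc h0 hn k hk
  by_contra hck
  obtain ⟨z, hz, -⟩ := hΓ.2
  exact hck <| mem_supportVertices_of_topModule_mem <| hΓ.mem_of_homPath hz
    (homPath_topModule_of_end_mem_supportVertices hΓ.1 hz hc hn hk hck)
    (homPath_topModule_of_start_mem_supportVertices hΓ.1 hz hc h0 hk hck) hz

/-- **Proposition (convexity of the support).** Let `A` be a basic indecomposable artin
algebra and `Γ` a cycle-finite component of the cyclic quiver `_cΓ_A`. Then the support
`supp(Γ)` of `Γ` — the set of vertices `i` of `Q_A` with `X e_i ≠ 0` for some module `X`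
in `Γ` — is a convex subcategory of `A`. -/
theorem support_of_cycle_finite_component_convex
    (K A : Type u) [CommRing K] [IsArtinianRing K] [Ring A] [Algebra K A]
    [Module.Finite K A] (hbasic : IsBasicAlgebra A) (hconn : IsConnectedAlgebra A)
    (Γ : Set (ARVertex Aᵐᵒᵖ)) (hΓ : IsCycleFiniteCyclicComponent Γ)
    (E : CompleteIdemFamily A) :
    ConvexVertexSet A E {i | ∃ x ∈ Γ, ∃ X : IndecModA Aᵐᵒᵖ, ARVertex.mk X = x ∧
      ∃ m : X.1.M, MulOpposite.op (E.e i) • m ≠ 0} := by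
  have : Module.Finite K Aᵐᵒᵖ := Module.Finite.equiv (MulOpposite.opLinearEquiv K : A ≃ₗ[K] Aᵐᵒᵖ)
  have : IsArtinianRing Aᵐᵒᵖ := isArtinian_of_tower K inferInstance
  exact support_of_cycle_finite_component_convex_general A Γ hΓ E
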